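/- Let m > 1 be an integer. There exist a constant c > 0 and a real number X₀ such that for all real X ≥ X₀, the number of negative squarefree integers d such that the absolute value of the discriminant of the imaginary quadratic field ℚ(√d) is at most X and the ideal class group Cl(ℚ(√d)) contains a subgroup isomorphic to (ℤ/mℤ)² is at least c · X^(1/m) / (log X)². -/

import Mathlib

/-!
A solution of `W R + S = aⁿ`, `R + W S = bⁿ` makes `θ² = -W R S` satisfy
`(W R - S)² + 4 W R S = a²ⁿ` and `(R - W S)² + 4 W R S = b²ⁿ`, so for `m ∣ 2n` and `a`, `b` coprime
to each other and to `2 W` the elements `(W R - S) + 2 θ` and `(R - W S) + 2 θ` generate `m`-th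
powers of ideals `I` and `J` in the ring of integers of `ℚ(θ)`. The classes of `I` and `J` span a
copy of `(ℤ/m)²` once the two elements are independent modulo units and `p`-th powers for every
prime `p ∣ m`, and prescribing `a` and `b` modulo three suitable primes enforces this independence.

Distinct fields come from distinct squarefree parts of `W R S`. For even `m = 2n`, let `a` be a
power of a fixed prime and `b` range over a residue class in `[a, 2a)`: a power of a prime is
represented in essentially one way by `x² + 4 e y²`, so distinct `b` give distinct fields. For odd
`m = n`, take `W = cᵐ` and solve `c b - a = p u`, `c a - b = q v` with primes `p`, `q ≤ N` and
bounded `u`, `v`: then `p` and `q` divide the squarefree part, which is bounded by a power of `N`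
and hence has boundedly many prime divisors above `√N`, while Chebyshev's bound supplies
`≫ (N / log N)²` pairs.
-/

open NumberField

/-- `d` is a negative squarefree integer such that the imaginary quadratic field
`ℚ(√d)` (characterized as a degree-2 number field containing a square root of `d`)
has `|discriminant| ≤ X` and its ideal class group contains a subgroup isomorphic
to `(ℤ/mℤ)²`. -/
def GoodRankMsq (m : ℕ) (X : ℝ) (d : ℤ) : Prop :=
  d < 0 ∧ Squarefree d ∧
  ∀ (K : Type) [Field K] [NumberField K],
    (∃ x : K, x * x = (d : K)) → Module.finrank ℚ K = 2 →
      (|NumberField.discr K| : ℝ) ≤ X ∧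
      ∃ f : Multiplicative (ZMod m × ZMod m) →* ClassGroup (𝓞 K), Function.Injective f

/-! ### Imaginary quadratic orders -/

theorem mul_self_sub_trace_mul_add_norm {R S : Type*} [CommRing R] [CommRing S] [Algebra R S]
    (b : Module.Basis (Fin 2) R S) (z : S) :
    z * z - algebraMap R S (Algebra.trace R S z) * z + algebraMap R S (Algebra.norm R z) = 0 := by
  apply Algebra.leftMulMatrix_injective b
  simp only [map_add, map_sub, map_mul, map_zero, AlgHom.commutes]
  rw [Algebra.trace_eq_matrix_trace b, Algebra.norm_eq_matrix_det b, Matrix.trace_fin_two,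
    Matrix.det_fin_two]
  ext i j
  fin_cases i <;> fin_cases j <;>
    simp [Matrix.mul_apply, Fin.sum_univ_two, Matrix.algebraMap_matrix_apply] <;> ring

section QuadraticOrder

variable {O : Type*} [CommRing O] [CharZero O] (b : Module.Basis (Fin 2) ℤ O)
  {D : ℤ} {θ : O}

omit [CharZero O] in
theorem trace_intCast_mul (k : ℤ) (z : O) :
    Algebra.trace ℤ O (k * z) = k * Algebra.trace ℤ O z := by
  rw [← zsmul_eq_mul, map_zsmul, smul_eq_mul]

include b

omit [CharZero O] in
theorem trace_intCast (k : ℤ) : Algebra.trace ℤ O k = 2 * k := by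
  rw [← eq_intCast (algebraMap ℤ O), Algebra.trace_algebraMap_of_basis b, Fintype.card_fin,
    nsmul_eq_mul, Nat.cast_two]

theorem trace_eq_zero_of_mul_self_eq_neg (hθ : θ * θ = D) (hD : D < 0) :
    Algebra.trace ℤ O θ = 0 := by
  have hcayley := mul_self_sub_trace_mul_add_norm b θ
  set t := Algebra.trace ℤ O θ
  set n := Algebra.norm ℤ θ
  simp only [algebraMap_int_eq, eq_intCast] at hcayley
  have hsq : t * t * D = (D + n) * (D + n) := by
    have : ((t * t * D : ℤ) : O) = ((D + n) * (D + n) : ℤ) := by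
      push_cast
      linear_combination (-(t : O) * t + (t * θ + D + n)) * hθ - (t * θ + D + n) * hcayley
    exact_mod_cast this
  nlinarith [mul_self_nonneg (D + n), mul_self_nonneg t]

theorem two_mul_mul_eq_trace (hθ : θ * θ = D) (hD : D < 0) (z : O) :
    2 * (z * θ) = (Algebra.trace ℤ O z : O) * θ + (Algebra.trace ℤ O (z * θ) : O) := by
  have htrace := trace_eq_zero_of_mul_self_eq_neg b hθ hD
  -- Polarizing the Cayley–Hamilton identity leaves one unknown integer; the trace determines it.
  obtain ⟨n, hn⟩ : ∃ n : ℤ, 2 * (z * θ) = (Algebra.trace ℤ O z : O) * θ + n := by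
    have h₁ := mul_self_sub_trace_mul_add_norm b (z + θ)
    have h₂ := mul_self_sub_trace_mul_add_norm b z
    have h₃ := mul_self_sub_trace_mul_add_norm b θ
    simp only [map_add, htrace, algebraMap_int_eq, eq_intCast, add_zero, Int.cast_zero] at h₁ h₂ h₃
    refine ⟨Algebra.norm ℤ z + Algebra.norm ℤ θ - Algebra.norm ℤ (z + θ), ?_⟩
    push_cast
    linear_combination h₁ - h₂ - h₃
  have hn' : 2 * Algebra.trace ℤ O (z * θ) = 2 * n := by
    have h := congrArg (Algebra.trace ℤ O) hn
    rwa [← Int.cast_ofNat, trace_intCast_mul, map_add, trace_intCast_mul, htrace, mul_zero,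
      zero_add, trace_intCast b] at h
  rw [hn, mul_left_cancel₀ two_ne_zero hn']

theorem mul_trace_sq_sub_four_mul_norm (hθ : θ * θ = D) (hD : D < 0) (z : O) :
    D * (Algebra.trace ℤ O z ^ 2 - 4 * Algebra.norm ℤ z) = Algebra.trace ℤ O (z * θ) ^ 2 := by
  have hcayley := mul_self_sub_trace_mul_add_norm b z
  have hz := two_mul_mul_eq_trace b hθ hD z
  simp only [algebraMap_int_eq, eq_intCast] at hcayley
  set t := Algebra.trace ℤ O z
  set n := Algebra.norm ℤ z
  set s := Algebra.trace ℤ O (z * θ)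
  have : ((D * (t ^ 2 - 4 * n) : ℤ) : O) = (s ^ 2 : ℤ) := by
    push_cast
    linear_combination (-((t : O) ^ 2 - 4 * n)) * hθ - 4 * θ * θ * hcayley +
      (2 * z * θ - t * θ + s) * hz
  exact_mod_cast this

theorem pow_twelve_eq_one_of_isUnit [IsDomain O] (hθ : θ * θ = D) (hD : D < 0) {ε : O}
    (hε : IsUnit ε) : ε ^ 12 = 1 := by
  have hcayley := mul_self_sub_trace_mul_add_norm b ε
  have htn := mul_trace_sq_sub_four_mul_norm b hθ hD ε
  have hle : Algebra.trace ℤ O ε ^ 2 ≤ 4 * Algebra.norm ℤ ε := by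
    nlinarith [sq_nonneg (Algebra.trace ℤ O (ε * θ))]
  have hnorm : Algebra.norm ℤ ε = 1 := by
    have := sq_nonneg (Algebra.trace ℤ O ε)
    rcases Int.isUnit_iff.1 (hε.map (Algebra.norm ℤ)) with h | h <;> omega
  rw [hnorm] at hcayley hle
  have hlo : -2 ≤ Algebra.trace ℤ O ε := by nlinarith
  have hhi : Algebra.trace ℤ O ε ≤ 2 := by nlinarith
  set t := Algebra.trace ℤ O ε
  simp only [algebraMap_int_eq, eq_intCast, Int.cast_one] at hcayley
  -- The five possible minimal polynomials of `ε` are `(T ± 1)²` and `Φ₃`, `Φ₄`, `Φ₆`.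
  interval_cases t
  · have h : ε + 1 = 0 := mul_self_eq_zero.1 (by push_cast at hcayley; linear_combination hcayley)
    rw [eq_neg_of_add_eq_zero_left h]
    norm_num
  · have h : ε ^ 3 = 1 := by push_cast at hcayley; linear_combination (ε - 1) * hcayley
    rw [show 12 = 3 * 4 from rfl, pow_mul, h, one_pow]
  · have h : ε ^ 2 = -1 := by push_cast at hcayley; linear_combination hcayley
    rw [show 12 = 2 * 6 from rfl, pow_mul, h]
    norm_num
  · have h : ε ^ 3 = -1 := by push_cast at hcayley; linear_combination (ε + 1) * hcayley
    rw [show 12 = 3 * 4 from rfl, pow_mul, h]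
    norm_num
  · have h : ε - 1 = 0 := mul_self_eq_zero.1 (by push_cast at hcayley; linear_combination hcayley)
    rw [sub_eq_zero.1 h, one_pow]

theorem two_mul_trace_mul_mul (hθ : θ * θ = D) (hD : D < 0) (z w : O) :
    2 * Algebra.trace ℤ O (z * w * θ) =
      Algebra.trace ℤ O z * Algebra.trace ℤ O (w * θ) +
        Algebra.trace ℤ O (z * θ) * Algebra.trace ℤ O w := by
  have h := congrArg (fun x => Algebra.trace ℤ O (x * w)) (two_mul_mul_eq_trace b hθ hD z)
  simp only [add_mul, mul_assoc, map_add, trace_intCast_mul] at h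
  rwa [← Int.cast_ofNat, trace_intCast_mul, mul_comm θ w, ← mul_assoc z] at h

theorem two_mul_trace_mul (hθ : θ * θ = D) (hD : D < 0) (z w : O) :
    2 * D * Algebra.trace ℤ O (z * w) =
      D * (Algebra.trace ℤ O z * Algebra.trace ℤ O w) +
        Algebra.trace ℤ O (z * θ) * Algebra.trace ℤ O (w * θ) := by
  have h := two_mul_trace_mul_mul b hθ hD z (w * θ)
  rw [show z * (w * θ) * θ = D * (z * w) by rw [← hθ]; ring,
    show w * θ * θ = D * w by rw [← hθ]; ring, trace_intCast_mul, trace_intCast_mul] at h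
  linear_combination h

theorem exists_ringHom_apply_eq {F : Type*} [Field F] (hθ : θ * θ = D) (hD : D < 0) {δ : F}
    (hδ : δ * δ = D) (hδ₀ : 2 * δ ≠ 0) : ∃ φ : O →+* F, φ θ = δ := by
  obtain ⟨h2, hδ0⟩ := mul_ne_zero_iff.1 hδ₀
  let t (z : O) : F := (Algebra.trace ℤ O z : ℤ)
  let s (z : O) : F := (Algebra.trace ℤ O (z * θ) : ℤ)
  have htrace : Algebra.trace ℤ O θ = 0 := trace_eq_zero_of_mul_self_eq_neg b hθ hD
  have ht1 : t 1 = 2 := by simpa [t] using congrArg (Int.cast : ℤ → F) (trace_intCast b 1)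
  have hs1 : s 1 = 0 := by simp [s, htrace]
  have hsθ : s θ = 2 * (δ * δ) := by
    simpa [s, hθ, hδ] using congrArg (Int.cast : ℤ → F) (trace_intCast b D)
  have hmul (z w : O) : 2 * s (z * w) = t z * s w + s z * t w := by
    simpa [t, s] using congrArg (Int.cast : ℤ → F) (two_mul_trace_mul_mul b hθ hD z w)
  have hmul' (z w : O) : 2 * (δ * δ) * t (z * w) = δ * δ * (t z * t w) + s z * s w := by
    rw [hδ]
    simpa [t, s, mul_assoc] using congrArg (Int.cast : ℤ → F) (two_mul_trace_mul b hθ hD z w)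
  have hzero : t 0 = 0 ∧ s 0 = 0 := by simp [t, s]
  have hadd (z w : O) : t (z + w) = t z + t w ∧ s (z + w) = s z + s w := by
    simp [t, s, add_mul]
  refine ⟨⟨⟨⟨fun z => (t z + s z / δ) / 2, ?_⟩, fun z w => ?_⟩, ?_, fun z w => ?_⟩, ?_⟩
  · simp [ht1, hs1, h2]
  · simp only
    field_simp
    linear_combination hmul' z w + δ * hmul z w
  · simp [hzero]
  · simp only [(hadd z w).1, (hadd z w).2]
    ring
  · simp only [RingHom.coe_mk, MonoidHom.coe_mk, OneHom.coe_mk, hsθ, t, htrace]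
    field_simp
    simp

theorem exists_four_mul_eq_sq_mul_discr (hθ : θ * θ = D) (hD : D < 0) :
    ∃ k : ℤ, 4 * D = k ^ 2 * Algebra.discr ℤ b := by
  refine ⟨(b.toMatrix ![1, θ]).det, ?_⟩
  have h := Algebra.discr_of_matrix_vecMul b (b.toMatrix ![1, θ])
  rw [Module.Basis.toMatrix_map_vecMul, Algebra.discr_def, Matrix.det_fin_two] at h
  have htrace : Algebra.trace ℤ O θ = 0 := trace_eq_zero_of_mul_self_eq_neg b hθ hD
  have h1 : Algebra.trace ℤ O 1 = 2 := by simpa using trace_intCast b 1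
  have hθθ : Algebra.trace ℤ O (θ * θ) = 2 * D := by rw [hθ, trace_intCast b]
  simp only [Algebra.traceMatrix_apply, Algebra.traceForm_apply, Matrix.cons_val_zero,
    Matrix.cons_val_one, mul_one, one_mul, htrace, h1, hθθ] at h
  linear_combination h

end QuadraticOrder

theorem sq_le_four_of_four_mul_eq_sq_mul {d k Δ : ℤ} (hd : Squarefree d)
    (h : 4 * d = k ^ 2 * Δ) : k ^ 2 ≤ 4 := by
  rcases Int.even_or_odd k with ⟨j, rfl⟩ | hk
  · have hj : IsUnit j := hd j ⟨Δ, by linarith⟩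
    rcases Int.isUnit_iff.1 hj with rfl | rfl <;> norm_num
  · have hcop : IsCoprime (k ^ 2) (2 ^ 2) := (Int.isCoprime_two_right.2 hk).pow
    have hk : IsUnit k := hd k (by rw [← sq]; exact hcop.dvd_of_dvd_mul_left ⟨Δ, h⟩)
    rcases Int.isUnit_iff.1 hk with rfl | rfl <;> norm_num

theorem exists_ringOfIntegers_mul_self_eq {K : Type*} [Field K] {d : ℤ} {x : K} (hx : x * x = d) :
    ∃ θ : 𝓞 K, θ * θ = d := by
  have hint : IsIntegral ℤ x := by
    refine IsIntegral.of_pow two_pos ?_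
    rw [sq, hx]
    exact isIntegral_algebraMap (R := ℤ)
  exact ⟨⟨x, hint⟩, RingOfIntegers.ext (show x * x = algebraMap (𝓞 K) K d by rwa [map_intCast])⟩

section QuadraticField

variable {K : Type*} [Field K] [NumberField K] {d : ℤ}

theorem nonempty_basis_ringOfIntegers (hK : Module.finrank ℚ K = 2) :
    Nonempty (Module.Basis (Fin 2) ℤ (𝓞 K)) :=
  ⟨Module.finBasisOfFinrankEq ℤ (𝓞 K) (by rw [RingOfIntegers.rank, hK])⟩

theorem exists_four_mul_eq_sq_mul_numberField_discr (hd : d < 0) (hx : ∃ x : K, x * x = d)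
    (hK : Module.finrank ℚ K = 2) : ∃ k : ℤ, 4 * d = k ^ 2 * discr K := by
  obtain ⟨x, hx⟩ := hx
  obtain ⟨b⟩ := nonempty_basis_ringOfIntegers hK
  obtain ⟨θ, hθ⟩ := exists_ringOfIntegers_mul_self_eq hx
  rw [← NumberField.discr_eq_discr K b]
  exact exists_four_mul_eq_sq_mul_discr b hθ hd

theorem abs_discr_le_four_mul_abs (hd : d < 0) (hx : ∃ x : K, x * x = d)
    (hK : Module.finrank ℚ K = 2) : |discr K| ≤ 4 * |d| := by
  obtain ⟨k, hk⟩ := exists_four_mul_eq_sq_mul_numberField_discr hd hx hK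
  have h4 : 4 * |d| = |4 * d| := by rw [abs_mul, Nat.abs_ofNat]
  rw [h4]
  refine Int.le_of_dvd (abs_pos.2 (by omega)) ((abs_dvd_abs _ _).2 ⟨k ^ 2, ?_⟩)
  rw [hk, mul_comm]

theorem abs_le_abs_discr (hd : d < 0) (hsq : Squarefree d) (hx : ∃ x : K, x * x = d)
    (hK : Module.finrank ℚ K = 2) : |d| ≤ |discr K| := by
  obtain ⟨k, hk⟩ := exists_four_mul_eq_sq_mul_numberField_discr hd hx hK
  have hle := sq_le_four_of_four_mul_eq_sq_mul hsq hk
  have : 4 * |d| = k ^ 2 * |discr K| := by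
    rw [← abs_of_nonneg (sq_nonneg k), ← abs_mul, ← hk, abs_mul, Nat.abs_ofNat]
  nlinarith [abs_nonneg (discr K)]

end QuadraticField

theorem exists_imaginary_quadratic_field {d : ℤ} (hd : d < 0) :
    ∃ (K : Type) (_ : Field K) (_ : NumberField K),
      (∃ x : K, x * x = d) ∧ Module.finrank ℚ K = 2 := by
  have : Fact (∀ r : ℚ, r ^ 2 ≠ (d : ℚ) + 0 * r) := ⟨fun r h => by
    have : (d : ℚ) < 0 := by exact_mod_cast hd
    nlinarith [sq_nonneg r]⟩
  have hrank : Module.finrank ℚ (QuadraticAlgebra ℚ (d : ℚ) 0) = 2 :=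
    QuadraticAlgebra.finrank_eq_two _ _
  have : CharZero (QuadraticAlgebra ℚ (d : ℚ) 0) :=
    charZero_of_injective_algebraMap (algebraMap ℚ _).injective
  have : FiniteDimensional ℚ (QuadraticAlgebra ℚ (d : ℚ) 0) :=
    Module.finite_of_finrank_pos (by rw [hrank]; norm_num)
  refine ⟨QuadraticAlgebra ℚ (d : ℚ) 0, inferInstance, ⟨⟩, ⟨QuadraticAlgebra.omega, ?_⟩, ?_⟩
  · ext <;> simp
  · convert hrank

/-! ### Independent classes from elements that are independent modulo powers -/

theorem dvd_and_dvd_of_pow_mul_pow_eq_one {G : Type*} [CommGroup G] {m : ℕ} (hm : m ≠ 0)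
    {g₁ g₂ : G}
    (hind : ∀ p k, p.Prime → m = p * k → ∀ i j, (g₁ ^ i * g₂ ^ j) ^ k = 1 → p ∣ i ∧ p ∣ j)
    {i j : ℕ} (hij : g₁ ^ i * g₂ ^ j = 1) : m ∣ i ∧ m ∣ j := by
  suffices ∀ e, e ∣ m → e ∣ i ∧ e ∣ j from this m dvd_rfl
  intro e
  induction e using induction_on_primes with
  | zero => exact fun h => absurd (zero_dvd_iff.1 h) hm
  | one => exact fun _ => ⟨one_dvd i, one_dvd j⟩
  | prime_mul p e hp ih =>
    rintro ⟨k, hk⟩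
    obtain ⟨⟨i, rfl⟩, j, rfl⟩ := ih ⟨p * k, by rw [hk]; ring⟩
    have hpow : (g₁ ^ i * g₂ ^ j) ^ (e * k) = 1 := by
      rw [pow_mul, mul_pow, ← pow_mul, ← pow_mul, mul_comm i, mul_comm j, hij, one_pow]
    obtain ⟨hi, hj⟩ := hind p (e * k) hp (by rw [hk, mul_assoc]) i j hpow
    rw [mul_comm p]
    exact ⟨mul_dvd_mul_left e hi, mul_dvd_mul_left e hj⟩

theorem exists_injective_zmod_prod_monoidHom {G : Type*} [CommGroup G] {m : ℕ} [NeZero m]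
    {g₁ g₂ : G} (h₁ : g₁ ^ m = 1) (h₂ : g₂ ^ m = 1)
    (hind : ∀ i j : ℕ, g₁ ^ i * g₂ ^ j = 1 → m ∣ i ∧ m ∣ j) :
    ∃ f : Multiplicative (ZMod m × ZMod m) →* G, Function.Injective f := by
  let F (g : G) (hg : g ^ m = 1) : ZMod m →+ Additive G :=
    ZMod.lift m ⟨zmultiplesHom _ (Additive.ofMul g), by simp [← ofMul_pow, hg]⟩
  have hF (g : G) (hg : g ^ m = 1) (k : ℕ) : F g hg k = Additive.ofMul (g ^ k) := by
    simpa [F] using ZMod.lift_coe m ⟨zmultiplesHom _ (Additive.ofMul g), _⟩ (k : ℤ)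
  let Φ : ZMod m × ZMod m →+ Additive G := (F g₁ h₁).coprod (F g₂ h₂)
  refine ⟨AddMonoidHom.toMultiplicativeLeft Φ, (injective_iff_map_eq_zero Φ).2 ?_⟩
  rintro ⟨x, y⟩ hxy
  obtain ⟨i, rfl⟩ := ZMod.natCast_zmod_surjective x
  obtain ⟨j, rfl⟩ := ZMod.natCast_zmod_surjective y
  rw [AddMonoidHom.coprod_apply, hF g₁ h₁, hF g₂ h₂, ← ofMul_mul] at hxy
  obtain ⟨hi, hj⟩ := hind i j hxy
  rw [(ZMod.natCast_eq_zero_iff i m).2 hi, (ZMod.natCast_eq_zero_iff j m).2 hj]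
  rfl

/-- `x` and `y` are independent in `A` modulo units and `p`-th powers: a monomial in `x` and `y` is
a unit times a `p`-th power only if both exponents are divisible by `p`. For prime `p` dividing `m`
this is the condition under which `m`-th roots of the ideals `(x)` and `(y)` have independent
classes. -/
def IndepModUnitPowers {A : Type*} [CommRing A] (p : ℕ) (x y : A) : Prop :=
  ∀ (i j : ℕ) (ε : Aˣ) (β : A), x ^ i * y ^ j = ε * β ^ p → p ∣ i ∧ p ∣ j

section DedekindDomain

variable {A : Type*} [CommRing A] [IsDedekindDomain A]

theorem exists_injective_zmod_prod_classGroup {m : ℕ} (hm : m ≠ 0) {x y : A} (hx : x ≠ 0)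
    (hy : y ≠ 0) {I J : Ideal A} (hI : Ideal.span {x} = I ^ m) (hJ : Ideal.span {y} = J ^ m)
    (hind : ∀ p, p.Prime → p ∣ m → IndepModUnitPowers p x y) :
    ∃ f : Multiplicative (ZMod m × ZMod m) →* ClassGroup A, Function.Injective f := by
  have : NeZero m := ⟨hm⟩
  have mem_nonZeroDivisors {x : A} (hx : x ≠ 0) {I : Ideal A} (hI : Ideal.span {x} = I ^ m) :
      I ∈ nonZeroDivisors (Ideal A) := by
    refine mem_nonZeroDivisors_of_ne_zero (pow_ne_zero_iff hm |>.1 ?_)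
    rwa [← hI, Ne, Ideal.zero_eq_bot, Ideal.span_singleton_eq_bot]
  let I₀ : nonZeroDivisors (Ideal A) := ⟨I, mem_nonZeroDivisors hx hI⟩
  let J₀ : nonZeroDivisors (Ideal A) := ⟨J, mem_nonZeroDivisors hy hJ⟩
  refine exists_injective_zmod_prod_monoidHom (g₁ := ClassGroup.mk0 I₀) (g₂ := ClassGroup.mk0 J₀)
    ?_ ?_ fun i j hij => dvd_and_dvd_of_pow_mul_pow_eq_one hm ?_ hij
  · rw [← map_pow, ClassGroup.mk0_eq_one_iff]
    exact ⟨x, hI.symm⟩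
  · rw [← map_pow, ClassGroup.mk0_eq_one_iff]
    exact ⟨y, hJ.symm⟩
  · intro p k hp hm i j h
    rw [← map_pow, ← map_pow, ← map_mul, ← map_pow, ClassGroup.mk0_eq_one_iff] at h
    obtain ⟨β, hβ : (I ^ i * J ^ j) ^ k = Ideal.span {β}⟩ := h
    have hspan : Ideal.span {x ^ i * y ^ j} = Ideal.span {β ^ p} := by
      rw [← Ideal.span_singleton_mul_span_singleton]
      simp only [← Ideal.span_singleton_pow]
      rw [hI, hJ, ← hβ, hm]
      ring
    obtain ⟨u, hu⟩ := Ideal.span_singleton_eq_span_singleton.1 hspan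
    exact hind p hp ⟨k, hm⟩ i j u⁻¹ β <| by
      rw [← hu, mul_comm (↑u⁻¹ : A), Units.mul_inv_cancel_right]

theorem exists_span_singleton_eq_pow {x y c t : A} {m : ℕ} (hmul : x * y = c ^ m)
    (hadd : x + y = t) (hcop : IsCoprime c t) : ∃ I : Ideal A, Ideal.span {x} = I ^ m := by
  have hxy : IsCoprime x y := by
    have h : IsCoprime (x * y) (x + y) := by rw [hmul, hadd]; exact hcop.pow_left
    exact IsCoprime.of_mul_add_left_right (z := 1) (by rw [mul_one]; exact h.of_mul_left_left)
  refine exists_eq_pow_of_mul_eq_pow_of_coprime (b := Ideal.span {y}) (c := Ideal.span {c})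
    ((Ideal.isCoprime_span_singleton_iff x y).2 hxy) ?_
  rw [Ideal.span_singleton_mul_span_singleton, hmul, Ideal.span_singleton_pow]

end DedekindDomain

/-! ### Detecting independence by power residues -/

section PowerResidues

variable {A F : Type*} [CommRing A] [Field F] {p k : ℕ} {φ : A →+* F}
  {x y β : A} {ε : Aˣ} {i j : ℕ}

theorem map_monomial_pow_eq_one [Fintype F] (hp : p ≠ 0) (hcard : Fintype.card F - 1 = p * (12 * k))
    (hε : ε ^ 12 = 1) (h : x ^ i * y ^ j = ε * β ^ p) (hx : φ x ≠ 0) (hy : φ y ≠ 0) :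
    (φ x ^ i * φ y ^ j) ^ (12 * k) = 1 := by
  have hφ : φ x ^ i * φ y ^ j = φ ε * φ β ^ p := by simpa using congrArg φ h
  have hφε : φ ε ^ 12 = 1 := by
    rw [← map_pow, ← Units.val_pow_eq_pow_val, hε, Units.val_one, map_one]
  have hβ : φ β ≠ 0 := by
    intro h0
    rw [h0, zero_pow hp, mul_zero] at hφ
    exact mul_ne_zero (pow_ne_zero i hx) (pow_ne_zero j hy) hφ
  rw [hφ, mul_pow, pow_mul, hφε, one_pow, one_mul, ← pow_mul, ← hcard,
    FiniteField.pow_card_sub_one_eq_one _ hβ]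

theorem dvd_add_of_map_eq_generator {g : Fˣ} (hg : orderOf g = p * (12 * k)) (hk : k ≠ 0)
    (hx : φ x = g) (hy : φ y = g) (h : (φ x ^ i * φ y ^ j) ^ (12 * k) = 1) : p ∣ i + j := by
  rw [hx, hy, ← pow_add, ← pow_mul] at h
  have horder := orderOf_dvd_of_pow_eq_one (Units.ext (by simpa using h) : g ^ _ = 1)
  rw [hg] at horder
  exact Nat.dvd_of_mul_dvd_mul_right (by omega) horder

theorem modEq_of_map_eq_neg_inv_generator {g : Fˣ} (hg : orderOf g = p * (12 * k)) (hk : k ≠ 0)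
    (hx : φ x = -(g : F)⁻¹) (hy : φ y = g) (h : (φ x ^ i * φ y ^ j) ^ (12 * k) = 1) :
    j ≡ i [MOD p] := by
  have hxg : (φ x * g) ^ (i * (12 * k)) = 1 := by
    rw [hx, neg_mul, inv_mul_cancel₀ g.ne_zero, Even.neg_one_pow ⟨i * (6 * k), by ring⟩]
  have hpow : (g : F) ^ (j * (12 * k)) = (g : F) ^ (i * (12 * k)) := by
    refine mul_left_cancel₀ (a := φ x ^ (i * (12 * k))) (pow_ne_zero _ ?_) ?_
    · rw [hx]
      exact neg_ne_zero.2 (inv_ne_zero g.ne_zero)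
    · rw [← mul_pow _ _ (i * (12 * k)), hxg, ← h, hy, mul_pow, ← pow_mul, ← pow_mul]
  have hmod : j * (12 * k) ≡ i * (12 * k) [MOD p * (12 * k)] := by
    rw [← hg, ← pow_eq_pow_iff_modEq]
    exact Units.ext (by simpa using hpow)
  exact Nat.ModEq.mul_right_cancel' (by omega) hmod

theorem even_or_even_of_not_isSquare_map_mul [Fintype F]
    (hcard : Fintype.card F - 1 = 2 * (12 * k)) (hx : φ x ≠ 0) (hy : φ y ≠ 0)
    (hxy : ¬ IsSquare (φ x * φ y)) (h : (φ x ^ i * φ y ^ j) ^ (12 * k) = 1) : Even i ∨ Even j := by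
  by_contra! hodd
  simp only [Nat.not_even_iff_odd] at hodd
  obtain ⟨⟨s, rfl⟩, t, rfl⟩ := hodd
  have hF : ringChar F ≠ 2 := fun h2 => by
    have := FiniteField.even_card_of_char_two h2
    have := Fintype.card_pos (α := F)
    omega
  have hsq : IsSquare (φ x ^ (2 * s + 1) * φ y ^ (2 * t + 1)) := by
    refine (FiniteField.isSquare_iff hF (mul_ne_zero (pow_ne_zero _ hx) (pow_ne_zero _ hy))).2 ?_
    rwa [show Fintype.card F / 2 = 12 * k by omega]
  refine hxy ?_
  have hquot : φ x * φ y =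
      φ x ^ (2 * s + 1) * φ y ^ (2 * t + 1) / ((φ x ^ s * φ y ^ t) * (φ x ^ s * φ y ^ t)) := by
    field_simp
    ring
  rw [hquot]
  exact hsq.div (IsSquare.mul_self _)

end PowerResidues

/-- Values at the prime of a finite field `F` of the two algebraic integers of the construction:
if `θ` is a square root of `-WRS` and `δ` is the image of `θ` in `F`, then `u` and `v` are the
images of `(WR - S) + 2θ` and `(R - WS) + 2θ`. -/
def HasSplitValues {F : Type*} [Field F] (W R S : ℤ) (u v : F) : Prop :=
  ∃ δ : F, δ * δ = (-(W * R * S) : ℤ) ∧ 2 * δ ≠ 0 ∧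
    (W * R - S : ℤ) + 2 * δ = u ∧ (R - W * S : ℤ) + 2 * δ = v

section SplitValues

variable {F : Type*} [Field F] {W R S : ℤ}

theorem hasSplitValues_of_eq_one {g : F} (h2 : (2 : F) ≠ 0) (hg : g ≠ 0) (hg2 : g ^ 2 ≠ 1)
    (hW : (W : F) = 1) (hR : (R : F) = (g + 1) ^ 2 / (4 * g)) (hS : (W * R + S : F) = 1) :
    HasSplitValues W R S g g := by
  have h4 : (4 : F) ≠ 0 := by
    rw [show (4 : F) = 2 * 2 by norm_num]
    exact mul_ne_zero h2 h2
  have hS : (S : F) = 1 - (g + 1) ^ 2 / (4 * g) := by rw [← hR]; linear_combination hS - R * hW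
  refine ⟨(g ^ 2 - 1) / (4 * g), ?_,
    mul_ne_zero h2 (div_ne_zero (sub_ne_zero.2 hg2) (mul_ne_zero h4 hg)), ?_, ?_⟩ <;>
  · push_cast
    rw [hS, hR, hW]
    field_simp
    ring

theorem hasSplitValues_of_eq_neg_one {g : F} (h2 : (2 : F) ≠ 0) (hg : g ≠ 0) (hg2 : g ^ 2 ≠ 1)
    (hW : (W : F) = -1) (hR : (R : F) = (g - 1) ^ 2 / (4 * g)) (hS : (W * R + S : F) = 1) :
    HasSplitValues W R S (-g⁻¹) g := by
  have h4 : (4 : F) ≠ 0 := by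
    rw [show (4 : F) = 2 * 2 by norm_num]
    exact mul_ne_zero h2 h2
  have hS : (S : F) = 1 + (g - 1) ^ 2 / (4 * g) := by rw [← hR]; linear_combination hS - R * hW
  refine ⟨(g ^ 2 - 1) / (4 * g), ?_,
    mul_ne_zero h2 (div_ne_zero (sub_ne_zero.2 hg2) (mul_ne_zero h4 hg)), ?_, ?_⟩ <;>
  · push_cast
    rw [hS, hR, hW]
    field_simp
    ring

theorem sq_sub_one_ne_zero_of_not_isSquare {w : F} (hw : ¬ IsSquare w) (hneg : IsSquare (-1 : F)) :
    w ^ 2 - 1 ≠ 0 := by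
  intro h
  rcases sq_eq_one_iff.1 (sub_eq_zero.1 h) with rfl | rfl
  exacts [hw IsSquare.one, hw hneg]

theorem exists_hasSplitValues_not_isSquare_mul (h2 : (2 : F) ≠ 0) (hneg : IsSquare (-1 : F))
    (hW : ¬ IsSquare (W : F)) (hR : (W * R + S : F) = 1) (hS : (R + W * S : F) = 0) :
    ∃ u v : F, HasSplitValues W R S u v ∧ ¬ IsSquare (u * v) := by
  have hE := sq_sub_one_ne_zero_of_not_isSquare hW hneg
  have hW0 : (W : F) ≠ 0 := by rintro h; rw [h] at hW; exact hW IsSquare.zero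
  have hR' : (R : F) = W / (W ^ 2 - 1) := by
    rw [eq_div_iff hE]; linear_combination (W : F) * hR - hS
  have hS' : (S : F) = -1 / (W ^ 2 - 1) := by
    rw [eq_div_iff hE]; linear_combination (W : F) * hS - hR
  refine ⟨_, _, ⟨R, ?_, ?_, rfl, rfl⟩, fun hsq => hW ?_⟩
  · push_cast
    linear_combination (R : F) * hS
  · rw [hR']
    exact mul_ne_zero h2 (div_ne_zero hW0 hE)
  · have hquot : (W : F) = ((W * R - S : ℤ) + 2 * R) * ((R - W * S : ℤ) + 2 * R) /
        ((2 / (W - 1)) * (2 / (W - 1))) := by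
      have : (W : F) - 1 ≠ 0 := by
        rintro h; exact hE (by linear_combination ((W : F) + 1) * h)
      push_cast
      rw [hR', hS']
      field_simp
      ring
    rw [hquot]
    exact hsq.div (IsSquare.mul_self _)

end SplitValues

/-- Residue conditions at primes `q ≡ 1 (mod 12m)` forcing the integers `(WR - S) + 2θ` and
`(R - WS) + 2θ`, with `θ² = -WRS`, to be independent modulo units and `p`-th powers for every prime
`p` dividing `m`: a relation with exponents `i` and `j` gives `p ∣ i + j` by `add`, `p ∣ i - j` by
`sub` and, if `p = 2`, that `i` or `j` is even by `nonsquare`. -/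
structure HasIndependentResidues (m : ℕ) (W R S : ℤ) : Prop where
  add : ∃ (q : ℕ) (_ : Fact q.Prime) (g : (ZMod q)ˣ), 12 * m ∣ q - 1 ∧ orderOf g = q - 1 ∧
    HasSplitValues W R S (g : ZMod q) g
  sub : ∃ (q : ℕ) (_ : Fact q.Prime) (g : (ZMod q)ˣ), 12 * m ∣ q - 1 ∧ orderOf g = q - 1 ∧
    HasSplitValues W R S (-(g : ZMod q)⁻¹) g
  nonsquare : ∃ (q : ℕ) (_ : Fact q.Prime) (u v : ZMod q), 12 * m ∣ q - 1 ∧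
    HasSplitValues W R S u v ∧ ¬ IsSquare (u * v)

theorem exists_sub_one_eq_mul_of_dvd {m p q : ℕ} (hq : q.Prime) (hpm : p ∣ m)
    (h : 12 * m ∣ q - 1) : ∃ k, k ≠ 0 ∧ q - 1 = p * (12 * k) := by
  obtain ⟨⟨t, rfl⟩, s, hs⟩ := hpm, h
  refine ⟨t * s, ?_, by rw [hs]; ring⟩
  intro h0
  have hzero : 12 * (p * t) * s = 0 := by
    rw [show 12 * (p * t) * s = 12 * p * (t * s) by ring, h0, mul_zero]
  have := hq.two_le
  omega

section QuadraticOrder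

variable {O : Type*} [CommRing O] [CharZero O] (b : Module.Basis (Fin 2) ℤ O) {W R S : ℤ} {θ : O}

include b

theorem HasSplitValues.exists_ringHom {F : Type*} [Field F] {u v : F}
    (h : HasSplitValues W R S u v) (hθ : θ * θ = (-(W * R * S) : ℤ)) (hD : -(W * R * S) < 0) :
    ∃ φ : O →+* F, φ ((W * R - S : ℤ) + 2 * θ) = u ∧ φ ((R - W * S : ℤ) + 2 * θ) = v := by
  obtain ⟨δ, hδ, hδ₀, rfl, rfl⟩ := h
  obtain ⟨φ, rfl⟩ := exists_ringHom_apply_eq b hθ hD hδ hδ₀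
  exact ⟨φ, by simp only [map_add, map_mul, map_intCast, map_ofNat, and_self]⟩

theorem HasIndependentResidues.indepModUnitPowers [IsDomain O] {m p : ℕ}
    (h : HasIndependentResidues m W R S) (hp : p.Prime) (hpm : p ∣ m)
    (hθ : θ * θ = (-(W * R * S) : ℤ)) (hD : -(W * R * S) < 0) :
    IndepModUnitPowers p ((W * R - S : ℤ) + 2 * θ) ((R - W * S : ℤ) + 2 * θ) := by
  intro i j ε β hε
  have hunit : ε ^ 12 = 1 := Units.ext (by simpa using pow_twelve_eq_one_of_isUnit b hθ hD ε.isUnit)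
  have key {q : ℕ} [Fact q.Prime] {k : ℕ} {φ : O →+* ZMod q} (hk : q - 1 = p * (12 * k)) :=
    map_monomial_pow_eq_one (φ := φ) hp.ne_zero (by rw [ZMod.card, hk]) hunit hε
  have hadd : p ∣ i + j := by
    obtain ⟨q, hq, g, hqm, hg, hv⟩ := h.add
    obtain ⟨k, hk₀, hk⟩ := exists_sub_one_eq_mul_of_dvd hq.out hpm hqm
    obtain ⟨φ, hx, hy⟩ := hv.exists_ringHom b hθ hD
    exact dvd_add_of_map_eq_generator (hg.trans hk) hk₀ hx hy
      (key hk (hx ▸ g.ne_zero) (hy ▸ g.ne_zero))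
  rcases hp.eq_two_or_odd' with rfl | hodd
  · have heven : Even i ∨ Even j := by
      obtain ⟨q, hq, u, v, hqm, hv, huv⟩ := h.nonsquare
      obtain ⟨k, -, hk⟩ := exists_sub_one_eq_mul_of_dvd hq.out hpm hqm
      obtain ⟨φ, rfl, rfl⟩ := hv.exists_ringHom b hθ hD
      have hne : φ ((W * R - S : ℤ) + 2 * θ) ≠ 0 ∧ φ ((R - W * S : ℤ) + 2 * θ) ≠ 0 :=
        mul_ne_zero_iff.1 fun h0 => huv (by rw [h0]; exact IsSquare.zero)
      exact even_or_even_of_not_isSquare_map_mul (by rw [ZMod.card, hk]) hne.1 hne.2 huv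
        (key hk hne.1 hne.2)
    simp only [even_iff_two_dvd] at heven
    omega
  · have hsub : j ≡ i [MOD p] := by
      obtain ⟨q, hq, g, hqm, hg, hv⟩ := h.sub
      obtain ⟨k, hk₀, hk⟩ := exists_sub_one_eq_mul_of_dvd hq.out hpm hqm
      obtain ⟨φ, hx, hy⟩ := hv.exists_ringHom b hθ hD
      exact modEq_of_map_eq_neg_inv_generator (hg.trans hk) hk₀ hx hy
        (key hk (hx ▸ neg_ne_zero.2 (inv_ne_zero g.ne_zero)) (hy ▸ g.ne_zero))
    have htwo : p ∣ 2 * i := by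
      rw [← Nat.modEq_zero_iff_dvd] at hadd ⊢
      calc 2 * i = i + i := two_mul i
        _ ≡ i + j [MOD p] := hsub.symm.add_left i
        _ ≡ 0 [MOD p] := hadd
    have hi : p ∣ i := (Nat.Coprime.dvd_mul_left (Nat.coprime_two_right.2 hodd)).1 htwo
    exact ⟨hi, (Nat.dvd_add_right hi).1 hadd⟩

end QuadraticOrder

/-- `W`, `R`, `S` solve the linear system attached to the `n`-th powers of the coprime integers `a`
and `b`. Then `(WR - S)² + 4WRS = a²ⁿ` and `(R - WS)² + 4WRS = b²ⁿ` are two representations of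
perfect powers by the same quadratic form. -/
structure IsCoprimePowerSystem (n : ℕ) (W R S a b : ℤ) : Prop where
  left : W * R + S = a ^ n
  right : R + W * S = b ^ n
  isCoprime : IsCoprime a b
  left_isCoprime : IsCoprime a (2 * W)
  right_isCoprime : IsCoprime b (2 * W)

namespace IsCoprimePowerSystem

variable {n : ℕ} {W R S a b : ℤ}

theorem swap (h : IsCoprimePowerSystem n W R S a b) : IsCoprimePowerSystem n W S R b a :=
  ⟨by rw [← h.right, add_comm], by rw [← h.left, add_comm], h.isCoprime.symm, h.right_isCoprime,
    h.left_isCoprime⟩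

theorem isCoprime_two_mul_sub (hn : n ≠ 0) (h : IsCoprimePowerSystem n W R S a b) :
    IsCoprime a (2 * (W * R - S)) := by
  have hcop : IsCoprime a (2 * (2 * W) * b ^ n) :=
    (h.left_isCoprime.of_mul_right_left.mul_right h.left_isCoprime).mul_right h.isCoprime.pow_right
  have hmul : (W ^ 2 - 1) * (2 * (W * R - S)) =
      -(2 * (2 * W) * b ^ n) + a * (2 * (W ^ 2 + 1) * a ^ (n - 1)) := by
    rw [mul_left_comm a, mul_pow_sub_one hn, ← h.left, ← h.right]
    ring
  refine IsCoprime.of_mul_right_right (y := W ^ 2 - 1) ?_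
  rw [hmul]
  exact hcop.neg_right.add_mul_left_right _

theorem sq_sub_add_eq_pow (h : IsCoprimePowerSystem n W R S a b) :
    (W * R - S) ^ 2 + 4 * (W * R * S) = a ^ (2 * n) := by
  rw [mul_comm 2 n, pow_mul, ← h.left]
  ring

end IsCoprimePowerSystem

theorem exists_span_add_two_mul_eq_pow {A : Type*} [CommRing A] [IsDedekindDomain A] {θ : A}
    {D t a : ℤ} {m k : ℕ} (hθ : θ * θ = (-D : ℤ)) (h : t ^ 2 + 4 * D = a ^ (m * k))
    (hcop : IsCoprime a (2 * t)) : ∃ I : Ideal A, Ideal.span {t + 2 * θ} = I ^ m := by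
  have hA : (t : A) ^ 2 + 4 * D = a ^ (m * k) := by exact_mod_cast congrArg (Int.cast (R := A)) h
  refine exists_span_singleton_eq_pow (y := t - 2 * θ) (c := (a : A) ^ k) (t := (2 * t : ℤ)) ?_ ?_
    (hcop.intCast.pow_left)
  · rw [← pow_mul, mul_comm k, ← hA]
    push_cast at hθ
    linear_combination (-4) * hθ
  · push_cast
    ring

/-- `ClassGroup (𝓞 K)` contains `(ℤ/m)²` for the quadratic field `K = ℚ(√D)`; vacuous if `D` is a
perfect square. -/
def HasClassRankTwo (m : ℕ) (D : ℤ) : Prop :=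
  ∀ (K : Type) [Field K] [NumberField K], (∃ x : K, x * x = D) → Module.finrank ℚ K = 2 →
    ∃ f : Multiplicative (ZMod m × ZMod m) →* ClassGroup (𝓞 K), Function.Injective f

theorem HasClassRankTwo.of_mul_mul_self {m : ℕ} {d y : ℤ} (h : HasClassRankTwo m (d * (y * y))) :
    HasClassRankTwo m d := by
  rintro K _ _ ⟨x, hx⟩ hK
  refine h K ⟨x * y, ?_⟩ hK
  push_cast
  rw [← hx]
  ring

theorem IsCoprimePowerSystem.hasClassRankTwo {m n : ℕ} {W R S a b : ℤ} (hm : m ≠ 0) (hn : n ≠ 0)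
    (hmn : m ∣ 2 * n) (hD : 0 < W * R * S) (h : IsCoprimePowerSystem n W R S a b)
    (hres : HasIndependentResidues m W R S) : HasClassRankTwo m (-(W * R * S)) := by
  rintro K _ _ ⟨x, hx⟩ hK
  replace hD := neg_neg_of_pos hD
  obtain ⟨θ, hθ⟩ := exists_ringOfIntegers_mul_self_eq hx
  obtain ⟨basis⟩ := nonempty_basis_ringOfIntegers hK
  obtain ⟨k, hk⟩ := hmn
  obtain ⟨I, hI⟩ := exists_span_add_two_mul_eq_pow hθ (hk ▸ h.sq_sub_add_eq_pow)
    (h.isCoprime_two_mul_sub hn)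
  obtain ⟨J, hJ⟩ := exists_span_add_two_mul_eq_pow (t := R - W * S) hθ
    (by rw [← hk, ← h.swap.sq_sub_add_eq_pow]; ring)
    (by rw [← neg_sub, mul_neg]; exact (h.swap.isCoprime_two_mul_sub hn).neg_right)
  obtain ⟨q, _, g, -, -, hv⟩ := hres.add
  obtain ⟨φ, hφx, hφy⟩ := hv.exists_ringHom basis hθ hD
  refine exists_injective_zmod_prod_classGroup hm ?_ ?_ hI hJ fun p hp hpm =>
    hres.indepModUnitPowers basis hp hpm hθ hD
  · exact fun h0 => g.ne_zero (by rw [← hφx, h0, map_zero])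
  · exact fun h0 => g.ne_zero (by rw [← hφy, h0, map_zero])

/-! ### Prescribing residues -/

theorem exists_pow_eq_of_pow_eq_one {G : Type*} [CommGroup G] [Finite G] [IsCyclic G] {n k : ℕ}
    (hcard : n * k = Nat.card G) {x : G} (hx : x ^ k = 1) : ∃ y : G, y ^ n = x := by
  have hn : 0 < n := Nat.pos_of_mul_pos_right (hcard ▸ Nat.card_pos)
  have hle : (powMonoidHom n : G →* G).range ≤ (powMonoidHom k).ker := by
    rintro _ ⟨y, rfl⟩
    simp only [MonoidHom.mem_ker, powMonoidHom_apply, ← pow_mul, hcard, pow_card_eq_one']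
  have heq := Subgroup.eq_of_le_of_card_ge hle <| by
    rw [IsCyclic.card_powMonoidHom_range, IsCyclic.card_powMonoidHom_ker, ← hcard,
      Nat.gcd_mul_left_left, Nat.gcd_mul_right_left, Nat.mul_div_cancel_left k hn]
  exact heq.ge hx

theorem exists_forall_modEq_of_pairwise_isCoprime {l : List (ℤ × ℤ)}
    (h : l.Pairwise fun x y => IsCoprime x.1 y.1) : ∃ z : ℤ, ∀ p ∈ l, z ≡ p.2 [ZMOD p.1] := by
  have hpair : Pairwise fun i j : Fin l.length =>
      IsCoprime (Ideal.span {l[i].1}) (Ideal.span {l[j].1}) := by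
    intro i j hij
    rw [Ideal.isCoprime_span_singleton_iff]
    rcases hij.lt_or_gt with hlt | hlt
    · exact List.pairwise_iff_getElem.1 h i j i.2 j.2 hlt
    · exact (List.pairwise_iff_getElem.1 h j i j.2 i.2 hlt).symm
  obtain ⟨z, hz⟩ := Ideal.exists_forall_sub_mem_ideal hpair fun i => l[i].2
  refine ⟨z, fun p hp => ?_⟩
  obtain ⟨i, hi, rfl⟩ := List.getElem_of_mem hp
  exact (Int.modEq_iff_dvd.2 (Ideal.mem_span_singleton.1 (hz ⟨i, hi⟩))).symm

/-- The primes at which residues are prescribed. The factor `12` kills the units of an imaginary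
quadratic field in every power residue symbol of order dividing `m`. -/
structure IsResiduePrime (m q : ℕ) : Prop where
  prime : q.Prime
  dvd_sub_one : 12 * m ∣ q - 1

namespace IsResiduePrime

variable {m q : ℕ}

theorem lt (h : IsResiduePrime m q) : 12 * m < q := by
  have := h.prime.two_le
  have := Nat.le_of_dvd (by omega) h.dvd_sub_one
  omega

theorem twelve_lt (h : IsResiduePrime m q) : 12 < q := by
  have := h.prime.two_le
  have := Nat.le_of_dvd (by omega) (dvd_of_mul_right_dvd h.dvd_sub_one)
  omega

theorem prime_intCast (h : IsResiduePrime m q) : Prime (q : ℤ) := Nat.prime_iff_prime_int.1 h.prime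

theorem two_ne_zero (h : IsResiduePrime m q) : (2 : ZMod q) ≠ 0 := by
  intro h2
  have := Nat.le_of_dvd two_pos ((ZMod.natCast_eq_zero_iff 2 q).1 (mod_cast h2))
  have := h.twelve_lt
  omega

theorem isSquare_neg_one (h : IsResiduePrime m q) : IsSquare (-1 : ZMod q) := by
  have := Fact.mk h.prime
  rw [ZMod.exists_sq_eq_neg_one_iff]
  have := dvd_of_mul_right_dvd h.dvd_sub_one
  have := h.prime.two_le
  omega

theorem exists_orderOf_eq (h : IsResiduePrime m q) :
    ∃ g : (ZMod q)ˣ, orderOf g = q - 1 ∧ (g : ZMod q) ^ 2 ≠ 1 := by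
  have := Fact.mk h.prime
  obtain ⟨g, hg⟩ := IsCyclic.exists_ofOrder_eq_natCard (α := (ZMod q)ˣ)
  rw [Nat.card_eq_fintype_card, ZMod.card_units] at hg
  refine ⟨g, hg, fun hsq => ?_⟩
  have hg2 : g ^ 2 = 1 := Units.ext (by simpa using hsq)
  have := Nat.le_of_dvd two_pos (orderOf_dvd_of_pow_eq_one hg2)
  have := h.twelve_lt
  omega

theorem exists_pow_modEq_sq (h : IsResiduePrime m q) {n : ℕ} (hn : n ∣ m) {c : ℤ}
    (hc : c ^ 2 ≡ 1 [ZMOD q]) : ∃ β : ℤ, β ^ n ≡ c [ZMOD (q : ℤ) ^ 2] := by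
  have := Fact.mk h.prime
  have := ZMod.isCyclic_units_of_prime_pow q h.prime (by have := h.twelve_lt; omega) 2
  have hcop : IsCoprime c ((q ^ 2 : ℕ) : ℤ) := by
    obtain ⟨k, hk⟩ := hc.dvd
    push_cast
    exact IsCoprime.pow_right ⟨c, k, by linear_combination -hk⟩
  have hpow : c ^ (2 * q) ≡ 1 [ZMOD (q : ℤ) ^ 2] := by
    refine (Int.modEq_iff_dvd.2 ?_).symm
    simpa [pow_mul] using dvd_sub_pow_of_dvd_sub (Int.modEq_iff_dvd.1 hc.symm) 1
  obtain ⟨k, hk⟩ : 2 * n ∣ q - 1 :=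
    (mul_dvd_mul (by norm_num) hn).trans h.dvd_sub_one
  have hcard : n * (2 * q * k) = Nat.card (ZMod (q ^ 2))ˣ := by
    rw [Nat.card_eq_fintype_card, ZMod.card_units_eq_totient, Nat.totient_prime_pow h.prime two_pos,
      hk]
    ring
  have hunit : (ZMod.unitOfIsCoprime c hcop) ^ (2 * q * k) = 1 := by
    rw [pow_mul]
    convert one_pow k
    ext
    have := (ZMod.intCast_eq_intCast_iff _ _ (q ^ 2)).2 (mod_cast hpow)
    simpa using this
  obtain ⟨y, hy⟩ := exists_pow_eq_of_pow_eq_one hcard hunit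
  obtain ⟨β, hβ⟩ := ZMod.intCast_surjective (y : ZMod (q ^ 2))
  refine ⟨β, ?_⟩
  have := (ZMod.intCast_eq_intCast_iff (β ^ n) c (q ^ 2)).1
    (by simpa [hβ] using congrArg Units.val hy)
  exact mod_cast this

end IsResiduePrime

theorem exists_isResiduePrime_gt {m : ℕ} (hm : m ≠ 0) (B : ℕ) :
    ∃ q, B < q ∧ IsResiduePrime m q := by
  obtain ⟨q, hq, hB, hmod⟩ := Nat.exists_prime_gt_modEq_one (k := 12 * m) B (by omega)
  exact ⟨q, hB, hq, (Nat.modEq_iff_dvd' hq.one_lt.le).1 hmod.symm⟩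

theorem exists_mul_add_eq_and_add_mul_eq {n : ℕ} {W a b : ℤ} (hW : 1 < W)
    (ha : a ^ n ≡ 1 [ZMOD W ^ 2 - 1]) (hb : W * b ^ n ≡ 1 [ZMOD W ^ 2 - 1])
    (hlt : b ^ n < W * a ^ n) (hlt' : a ^ n < W * b ^ n) :
    ∃ R S : ℤ, 0 < R ∧ 0 < S ∧ W * R + S = a ^ n ∧ R + W * S = b ^ n := by
  have hE : 0 < W ^ 2 - 1 := by nlinarith
  obtain ⟨S, hS⟩ := (ha.trans hb.symm).dvd
  have hR : W * a ^ n - b ^ n = (W ^ 2 - 1) * (b ^ n - W * S) := by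
    linear_combination -W * hS
  refine ⟨b ^ n - W * S, S, ?_, ?_, ?_, by ring⟩
  · exact pos_of_mul_pos_right (hR ▸ sub_pos.2 hlt) hE.le
  · exact pos_of_mul_pos_right (hS ▸ sub_pos.2 hlt') hE.le
  · linear_combination hS

theorem IsResiduePrime.exists_prescribed_residue {m n q : ℕ} {W : ℤ} (hq : IsResiduePrime m q)
    (hnm : n ∣ m) (hW : W ^ 2 ≡ 1 [ZMOD q]) (hW' : ¬ (q : ℤ) ^ 2 ∣ W ^ 2 - 1) (ρ : ZMod q) :
    ∃ β : ℤ, W * β ^ n ≡ 1 [ZMOD q] ∧ ∀ a b R S : ℤ, a ≡ 1 [ZMOD (q : ℤ) ^ 2] →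
      b ≡ β [ZMOD (q : ℤ) ^ 2] → W * R + S = a ^ n → R + W * S = b ^ n →
      (R : ZMod q) = ρ ∧ (W * R + S : ZMod q) = 1 := by
  obtain ⟨R₀, rfl⟩ := ZMod.intCast_surjective ρ
  obtain ⟨k, hk⟩ := hW.symm.dvd
  have hqk : ¬ (q : ℤ) ∣ k := fun ⟨l, hl⟩ => hW' ⟨l, by rw [hk, hl]; ring⟩
  have hsq : (W - (W ^ 2 - 1) * R₀) ^ 2 ≡ 1 [ZMOD q] :=
    (Int.modEq_iff_dvd.2 ⟨k * (1 - 2 * W * R₀ + (W ^ 2 - 1) * R₀ ^ 2), by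
      linear_combination (1 - 2 * W * R₀ + (W ^ 2 - 1) * R₀ ^ 2) * hk⟩).symm
  obtain ⟨β, hβ⟩ := hq.exists_pow_modEq_sq hnm hsq
  have hdvd : (q : ℤ) ∣ (q : ℤ) ^ 2 := dvd_pow_self _ (by norm_num)
  refine ⟨β, ?_, fun a b R S ha hb hleft hright => ⟨?_, ?_⟩⟩
  · refine ((hβ.of_dvd hdvd).mul_left W).trans (Int.modEq_iff_dvd.2 ⟨k * (W * R₀ - 1), ?_⟩)
    linear_combination (W * R₀ - 1) * hk
  · have hmod : (W ^ 2 - 1) * R ≡ (W ^ 2 - 1) * R₀ [ZMOD (q : ℤ) ^ 2] := by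
      have h := ((ha.pow n).mul_left W).sub ((hb.pow n).trans hβ)
      rw [← hleft, ← hright] at h
      convert h using 1 <;> ring
    rw [ZMod.intCast_eq_intCast_iff]
    rw [hk, mul_assoc, mul_assoc, sq] at hmod
    have h := (hmod.mul_left_cancel' (by exact_mod_cast hq.prime.ne_zero)).dvd
    exact Int.modEq_iff_dvd.2 <| (hq.prime_intCast.dvd_or_dvd
      (by rwa [← mul_sub] at h)).resolve_left hqk
  · have h := (ZMod.intCast_eq_intCast_iff _ _ q).2 (hleft ▸ (ha.of_dvd hdvd).pow n)
    simpa using h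

/-- The conditions on the coefficient `W` of the system `W * R + S = aⁿ`, `R + W * S = bⁿ` that let
one prescribe the residues of its solutions at a prime dividing `W - 1`, at a prime dividing
`W + 1`, and at a prime modulo which `W` is not a square. -/
structure IsAdmissibleCoefficient (m n : ℕ) (W : ℤ) : Prop where
  one_lt : 1 < W
  even : Even W
  sub_one : ∃ q, IsResiduePrime m q ∧ ∃ u : ℤ, W - 1 = q * u ∧ ¬ (q : ℤ) ∣ u
  add_one : ∃ q, IsResiduePrime m q ∧ ∃ v : ℤ, W + 1 = q * v ∧ ¬ (q : ℤ) ∣ v ∧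
    ∃ r, W * r ^ n ≡ 1 [ZMOD (W - 1) * v]
  nonsquare : ∃ q, IsResiduePrime m q ∧ ¬ IsSquare (W : ZMod q)

/-- The congruence `(a, b) ≡ (1, b₀)` modulo `M` suffices, together with coprimality and the size
constraints that make `R` and `S` positive, for the solution `(R, S)` of `W * R + S = aⁿ`,
`R + W * S = bⁿ` to be integral and give class groups of `m`-rank at least two. -/
def IsClassRankTwoModulus (m n : ℕ) (W M b₀ : ℤ) : Prop :=
  ∀ a b : ℤ, a ≡ 1 [ZMOD M] → b ≡ b₀ [ZMOD M] → IsCoprime a b →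
    b ^ n < W * a ^ n → a ^ n < W * b ^ n →
    ∃ R S : ℤ, 0 < R ∧ 0 < S ∧ W * R + S = a ^ n ∧ R + W * S = b ^ n ∧
      HasClassRankTwo m (-(W * R * S))

theorem isCoprime_sub_one_add_one_of_even {W : ℤ} (h : Even W) : IsCoprime (W - 1) (W + 1) := by
  obtain ⟨k, rfl⟩ := h
  exact ⟨k, 1 - k, by ring⟩

theorem IsResiduePrime.exists_hasSplitValues_of_modEq_one {m n q : ℕ} {W : ℤ}
    [Fact q.Prime] (hq : IsResiduePrime m q) (hnm : n ∣ m) (hW : W ≡ 1 [ZMOD q])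
    (hW' : ¬ (q : ℤ) ^ 2 ∣ W ^ 2 - 1) :
    ∃ β : ℤ, W * β ^ n ≡ 1 [ZMOD q] ∧ ∃ g : (ZMod q)ˣ, orderOf g = q - 1 ∧
      ∀ a b R S : ℤ, a ≡ 1 [ZMOD (q : ℤ) ^ 2] → b ≡ β [ZMOD (q : ℤ) ^ 2] →
        W * R + S = a ^ n → R + W * S = b ^ n → HasSplitValues W R S (g : ZMod q) g := by
  obtain ⟨g, hg, hg2⟩ := hq.exists_orderOf_eq
  obtain ⟨β, hβ, hres⟩ := hq.exists_prescribed_residue hnm (by simpa using hW.pow 2) hW'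
    (((g : ZMod q) + 1) ^ 2 / (4 * g))
  have hW1 : (W : ZMod q) = 1 := by simpa using (ZMod.intCast_eq_intCast_iff _ _ q).2 hW
  refine ⟨β, hβ, g, hg, fun a b R S ha hb hleft hright => ?_⟩
  obtain ⟨hR, hS⟩ := hres a b R S ha hb hleft hright
  exact hasSplitValues_of_eq_one hq.two_ne_zero g.ne_zero hg2 hW1 hR hS

theorem IsResiduePrime.exists_hasSplitValues_of_modEq_neg_one {m n q : ℕ} {W : ℤ}
    [Fact q.Prime] (hq : IsResiduePrime m q) (hnm : n ∣ m) (hW : W ≡ -1 [ZMOD q])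
    (hW' : ¬ (q : ℤ) ^ 2 ∣ W ^ 2 - 1) :
    ∃ β : ℤ, W * β ^ n ≡ 1 [ZMOD q] ∧ ∃ g : (ZMod q)ˣ, orderOf g = q - 1 ∧
      ∀ a b R S : ℤ, a ≡ 1 [ZMOD (q : ℤ) ^ 2] → b ≡ β [ZMOD (q : ℤ) ^ 2] →
        W * R + S = a ^ n → R + W * S = b ^ n →
        HasSplitValues W R S (-(g : ZMod q)⁻¹) g := by
  obtain ⟨g, hg, hg2⟩ := hq.exists_orderOf_eq
  obtain ⟨β, hβ, hres⟩ := hq.exists_prescribed_residue hnm (by simpa using hW.pow 2) hW'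
    (((g : ZMod q) - 1) ^ 2 / (4 * g))
  have hW1 : (W : ZMod q) = -1 := by simpa using (ZMod.intCast_eq_intCast_iff _ _ q).2 hW
  refine ⟨β, hβ, g, hg, fun a b R S ha hb hleft hright => ?_⟩
  obtain ⟨hR, hS⟩ := hres a b R S ha hb hleft hright
  exact hasSplitValues_of_eq_neg_one hq.two_ne_zero g.ne_zero hg2 hW1 hR hS

theorem IsResiduePrime.exists_hasSplitValues_of_not_isSquare {m n q : ℕ} {W a b R S : ℤ}
    [Fact q.Prime] (hq : IsResiduePrime m q) (hn : n ≠ 0) (hW : ¬ IsSquare (W : ZMod q))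
    (ha : a ≡ 1 [ZMOD q]) (hb : b ≡ 0 [ZMOD q]) (hleft : W * R + S = a ^ n)
    (hright : R + W * S = b ^ n) :
    ∃ u v : ZMod q, HasSplitValues W R S u v ∧ ¬ IsSquare (u * v) := by
  have hR := (ZMod.intCast_eq_intCast_iff _ _ q).2 (hleft ▸ ha.pow n)
  have hS := (ZMod.intCast_eq_intCast_iff _ _ q).2 (hright ▸ hb.pow n)
  exact exists_hasSplitValues_not_isSquare_mul hq.two_ne_zero hq.isSquare_neg_one hW
    (by simpa using hR) (by simpa [zero_pow hn] using hS)

theorem isCoprime_mul_sq_sub_one_of_not_isSquare {m q : ℕ} {W : ℤ} (hq : IsResiduePrime m q)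
    (hW : ¬ IsSquare (W : ZMod q)) : IsCoprime (q : ℤ) (W * (W ^ 2 - 1)) := by
  have := Fact.mk hq.prime
  refine (Prime.coprime_iff_not_dvd hq.prime_intCast).2 fun h => ?_
  have h0 := (ZMod.intCast_zmod_eq_zero_iff_dvd _ q).2 h
  push_cast at h0
  rcases mul_eq_zero.1 h0 with h0 | h0
  · exact hW (h0 ▸ IsSquare.zero)
  · exact sq_sub_one_ne_zero_of_not_isSquare hW hq.isSquare_neg_one h0

theorem exists_mul_pow_modEq_one {n q₁ q₂ : ℕ} {W u v q₃ β₁ β₂ r : ℤ} (hW : Even W)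
    (hq₁ : q₁.Prime) (hq₂ : q₂.Prime) (hu : W - 1 = q₁ * u) (hqu : ¬ (q₁ : ℤ) ∣ u)
    (hv : W + 1 = q₂ * v) (hqv : ¬ (q₂ : ℤ) ∣ v) (hq₃ : IsCoprime q₃ (W * (W ^ 2 - 1)))
    (hβ₁ : W * β₁ ^ n ≡ 1 [ZMOD q₁]) (hβ₂ : W * β₂ ^ n ≡ 1 [ZMOD q₂])
    (hr : W * r ^ n ≡ 1 [ZMOD u * v]) :
    ∃ b : ℤ, b ≡ β₁ [ZMOD (q₁ : ℤ) ^ 2] ∧ b ≡ β₂ [ZMOD (q₂ : ℤ) ^ 2] ∧ b ≡ 0 [ZMOD q₃] ∧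
      b ≡ 1 [ZMOD W] ∧ W * b ^ n ≡ 1 [ZMOD W ^ 2 - 1] := by
  have hE : W ^ 2 - 1 = q₁ * u * (q₂ * v) := by rw [← hu, ← hv]; ring
  have hsub : IsCoprime (q₁ * u) (q₂ * v) := hu ▸ hv ▸ isCoprime_sub_one_add_one_of_even hW
  have hWE : IsCoprime (q₁ * u * (q₂ * v)) W := ⟨-1, W, by rw [← hE]; ring⟩
  rw [hE] at hq₃
  have h₁u := (Prime.coprime_iff_not_dvd (Nat.prime_iff_prime_int.1 hq₁)).2 hqu
  have h₂v := (Prime.coprime_iff_not_dvd (Nat.prime_iff_prime_int.1 hq₂)).2 hqv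
  simp only [IsCoprime.mul_left_iff, IsCoprime.mul_right_iff] at hsub hWE hq₃
  obtain ⟨⟨h₁₂, hu₂⟩, h₁v, -⟩ := hsub
  obtain ⟨⟨h₁W, huW⟩, h₂W, hvW⟩ := hWE
  obtain ⟨h₃W, ⟨h₃₁, h₃u⟩, h₃₂, h₃v⟩ := hq₃
  obtain ⟨b, hb⟩ := exists_forall_modEq_of_pairwise_isCoprime
    (l := [((q₁ : ℤ) ^ 2, β₁), ((q₂ : ℤ) ^ 2, β₂), (u * v, r), (W, 1), (q₃, 0)]) <| by
      simp [IsCoprime.pow_left_iff, IsCoprime.pow_right_iff, IsCoprime.mul_left_iff,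
        IsCoprime.mul_right_iff, h₁₂, h₁u, h₁v, h₁W, h₃₁.symm, hu₂.symm, h₂v, h₂W, h₃₂.symm, huW,
        hvW, h₃u.symm, h₃v.symm, h₃W.symm]
  obtain ⟨hb₁, hb₂, hbuv, hbW, hb₃⟩ : b ≡ β₁ [ZMOD (q₁ : ℤ) ^ 2] ∧ b ≡ β₂ [ZMOD (q₂ : ℤ) ^ 2] ∧
    b ≡ r [ZMOD u * v] ∧ b ≡ 1 [ZMOD W] ∧ b ≡ 0 [ZMOD q₃] := by simpa using hb
  refine ⟨b, hb₁, hb₂, hb₃, hbW, ?_⟩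
  have hstep {q β : ℤ} (hβ : W * β ^ n ≡ 1 [ZMOD q]) (hbβ : b ≡ β [ZMOD q]) :
      q ∣ 1 - W * b ^ n := (((hbβ.pow n).mul_left W).trans hβ).dvd
  have hsq (q : ℤ) : q ∣ q ^ 2 := dvd_pow_self q two_ne_zero
  refine Int.modEq_iff_dvd.2 ?_
  rw [hE, show (q₁ * u * (q₂ * v) : ℤ) = q₁ * (q₂ * (u * v)) by ring]
  exact (h₁₂.mul_right (h₁u.mul_right h₁v)).mul_dvd (hstep hβ₁ (hb₁.of_dvd (hsq _)))
    ((hu₂.symm.mul_right h₂v).mul_dvd (hstep hβ₂ (hb₂.of_dvd (hsq _))) (hstep hr hbuv))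

theorem not_sq_dvd_mul_of_isCoprime {p u y : ℤ} (hp : p ≠ 0) (h : IsCoprime (p * u) y)
    (hu : ¬ p ∣ u) : ¬ p ^ 2 ∣ p * u * y := fun hdvd =>
  hu <| Int.dvd_of_mul_dvd_mul_left hp <|
    sq p ▸ (h.of_mul_left_left.pow_left (m := 2)).dvd_of_dvd_mul_right hdvd

theorem IsAdmissibleCoefficient.exists_hasIndependentResidues {m n : ℕ} {W : ℤ} (hn : n ≠ 0)
    (hnm : n ∣ m) (hW : IsAdmissibleCoefficient m n W) :
    ∃ M b₀ : ℤ, 0 < M ∧ W ∣ M ∧ W ^ 2 - 1 ∣ M ∧ b₀ ≡ 1 [ZMOD W] ∧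
      W * b₀ ^ n ≡ 1 [ZMOD W ^ 2 - 1] ∧ ∀ a b R S : ℤ, a ≡ 1 [ZMOD M] → b ≡ b₀ [ZMOD M] →
        W * R + S = a ^ n → R + W * S = b ^ n → HasIndependentResidues m W R S := by
  obtain ⟨q₁, hq₁, u, hu, hqu⟩ := hW.sub_one
  obtain ⟨q₂, hq₂, v, hv, hqv, r, hr⟩ := hW.add_one
  obtain ⟨q₃, hq₃, hsq⟩ := hW.nonsquare
  have hF₁ := Fact.mk hq₁.prime
  have hF₂ := Fact.mk hq₂.prime
  have hF₃ := Fact.mk hq₃.prime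
  have hE : W ^ 2 - 1 = q₁ * u * (q₂ * v) := by rw [← hu, ← hv]; ring
  have hcop : IsCoprime (q₁ * u) (q₂ * v) := hu ▸ hv ▸ isCoprime_sub_one_add_one_of_even hW.even
  have hW₁ : W ≡ 1 [ZMOD q₁] := (Int.modEq_iff_dvd.2 ⟨u, hu⟩).symm
  have hW₂ : W ≡ -1 [ZMOD q₂] := (Int.modEq_iff_dvd.2 ⟨v, by rw [← hv]; ring⟩).symm
  obtain ⟨β₁, hβ₁, g₁, hg₁, hval₁⟩ := hq₁.exists_hasSplitValues_of_modEq_one hnm hW₁ <|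
    hE ▸ not_sq_dvd_mul_of_isCoprime hq₁.prime_intCast.ne_zero hcop hqu
  obtain ⟨β₂, hβ₂, g₂, hg₂, hval₂⟩ := hq₂.exists_hasSplitValues_of_modEq_neg_one hnm hW₂ <|
    hE ▸ mul_comm (q₁ * u : ℤ) _ ▸
      not_sq_dvd_mul_of_isCoprime hq₂.prime_intCast.ne_zero hcop.symm hqv
  obtain ⟨b₀, hb₁, hb₂, hb₃, hbW, hone⟩ := exists_mul_pow_modEq_one hW.even hq₁.prime hq₂.prime hu
    hqu hv hqv (isCoprime_mul_sq_sub_one_of_not_isSquare hq₃ hsq) hβ₁ hβ₂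
    (hr.of_dvd ⟨q₁, by rw [hu]; ring⟩)
  have hM₁ : (q₁ : ℤ) ^ 2 ∣ (q₃ * W * (W ^ 2 - 1)) ^ 2 := pow_dvd_pow_of_dvd (by
    rw [hE, mul_assoc (q₁ : ℤ)]; exact (dvd_mul_right _ _).mul_left _) 2
  have hM₂ : (q₂ : ℤ) ^ 2 ∣ (q₃ * W * (W ^ 2 - 1)) ^ 2 := pow_dvd_pow_of_dvd (by
    rw [hE]; exact ((dvd_mul_right _ _).mul_left _).mul_left _) 2
  have hM₃ : (q₃ : ℤ) ∣ (q₃ * W * (W ^ 2 - 1)) ^ 2 :=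
    ((dvd_mul_right _ _).mul_right _).pow two_ne_zero
  refine ⟨(q₃ * W * (W ^ 2 - 1)) ^ 2, b₀, ?_, ((dvd_mul_left _ _).mul_right _).pow two_ne_zero,
    (dvd_mul_left _ _).pow two_ne_zero, hbW, hone, fun a b R S ha hb hleft hright =>
    ⟨⟨q₁, hF₁, g₁, hq₁.dvd_sub_one, hg₁, hval₁ a b R S (ha.of_dvd hM₁)
      ((hb.of_dvd hM₁).trans hb₁) hleft hright⟩,
    ⟨q₂, hF₂, g₂, hq₂.dvd_sub_one, hg₂, hval₂ a b R S (ha.of_dvd hM₂)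
      ((hb.of_dvd hM₂).trans hb₂) hleft hright⟩, ?_⟩⟩
  · have hE0 : 0 < W ^ 2 - 1 := by nlinarith [hW.one_lt]
    have := hW.one_lt
    have := hq₃.prime.pos
    positivity
  · obtain ⟨x, y, hxy, hns⟩ := hq₃.exists_hasSplitValues_of_not_isSquare hn hsq (ha.of_dvd hM₃)
      ((hb.of_dvd hM₃).trans hb₃) hleft hright
    exact ⟨q₃, hF₃, x, y, hq₃.dvd_sub_one, hxy, hns⟩

theorem isCoprime_of_modEq {a b N : ℤ} (h : a ≡ b [ZMOD N]) (hb : IsCoprime b N) :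
    IsCoprime a N := by
  obtain ⟨k, hk⟩ := h.symm.dvd
  rw [show a = b + N * k by linear_combination hk]
  exact hb.add_mul_left_left k

theorem IsAdmissibleCoefficient.exists_isClassRankTwoModulus {m n : ℕ} {W : ℤ} (hm : m ≠ 0)
    (hn : n ≠ 0) (hnm : n ∣ m) (hmn : m ∣ 2 * n) (hW : IsAdmissibleCoefficient m n W) :
    ∃ M b₀ : ℤ, 0 < M ∧ W ∣ M ∧ W ^ 2 - 1 ∣ M ∧ b₀ ≡ 1 [ZMOD W] ∧
      IsClassRankTwoModulus m n W M b₀ := by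
  obtain ⟨M, b₀, hM, hWM, hEM, hbW, hone, hres⟩ := hW.exists_hasIndependentResidues hn hnm
  refine ⟨M, b₀, hM, hWM, hEM, hbW, fun a b ha hb hab hlt hlt' => ?_⟩
  obtain ⟨R, S, hR, hS, hleft, hright⟩ := exists_mul_add_eq_and_add_mul_eq hW.one_lt
    (by simpa using (ha.of_dvd hEM).pow n)
    ((((hb.of_dvd hEM).pow n).mul_left W).trans hone) hlt hlt'
  have hcop {x : ℤ} (hx : x ≡ 1 [ZMOD W]) : IsCoprime x (2 * W) := by
    have hxW : IsCoprime x W := isCoprime_of_modEq hx isCoprime_one_left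
    exact (hxW.of_isCoprime_of_dvd_right hW.even.two_dvd).mul_right hxW
  refine ⟨R, S, hR, hS, hleft, hright, IsCoprimePowerSystem.hasClassRankTwo hm hn hmn
    (by have := hW.one_lt; positivity) ⟨hleft, hright, hab, hcop (ha.of_dvd hWM),
      hcop ((hb.of_dvd hWM).trans hbW)⟩ (hres a b R S ha hb hleft hright)⟩

theorem exists_pow_sub_one_eq_mul {p c t : ℤ} {m : ℕ} (hp : Prime p)
    (hc : c ≡ 1 + p * t [ZMOD p ^ 2]) (ht : ¬ p ∣ t) (hm : ¬ p ∣ m) :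
    ∃ u : ℤ, c ^ m - 1 = p * u ∧ ¬ p ∣ u := by
  obtain ⟨k, hk⟩ := hc.symm.dvd
  have hsub : c - 1 = p * (t + p * k) := by linear_combination hk
  have hpc : ¬ p ∣ c := fun h => hp.not_dvd_one ((dvd_sub_right h).1 ⟨_, hsub⟩)
  refine ⟨(t + p * k) * ∑ i ∈ Finset.range m, c ^ i, ?_, fun h => ?_⟩
  · rw [← mul_assoc, ← hsub, mul_geom_sum]
  · rcases hp.dvd_or_dvd h with h | h
    · exact ht ((dvd_add_left (dvd_mul_right p k)).1 h)
    · exact not_dvd_geom_sum₂ (y := 1) hp ⟨_, hsub⟩ hpc hm (by simpa using h)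

theorem isSquare_of_isSquare_pow_of_odd {F : Type*} [Field F] {m : ℕ} (hm : Odd m) {x : F}
    (h : IsSquare (x ^ m)) : IsSquare x := by
  obtain rfl | hx := eq_or_ne x 0
  · exact IsSquare.zero
  obtain ⟨k, rfl⟩ := hm
  have heq : x = x ^ (2 * k + 1) / x ^ (2 * k) := by rw [pow_succ]; field_simp
  rw [heq]
  exact h.div ((even_two_mul k).isSquare_pow x)

namespace IsResiduePrime

variable {m q : ℕ}

theorem not_dvd (h : IsResiduePrime m q) (hm : m ≠ 0) : ¬ q ∣ 12 * m := fun hdvd =>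
  h.lt.not_ge (Nat.le_of_dvd (by omega) hdvd)

theorem exists_not_isSquare (h : IsResiduePrime m q) : ∃ g : ℤ, ¬ IsSquare (g : ZMod q) := by
  have := Fact.mk h.prime
  obtain ⟨g, hg⟩ := FiniteField.exists_nonsquare (F := ZMod q) <| by
    rw [ZMod.ringChar_zmod_n]; have := h.twelve_lt; omega
  obtain ⟨z, rfl⟩ := ZMod.intCast_surjective g
  exact ⟨z, hg⟩

end IsResiduePrime

theorem exists_gt_modEq {N : ℤ} (hN : N ≠ 0) (B z : ℤ) : ∃ c, B < c ∧ c ≡ z [ZMOD N] := by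
  refine ⟨z + |N| * (|B - z| + 1), ?_, (Int.modEq_iff_dvd.2 ?_).symm⟩
  · have hle : |B - z| + 1 ≤ |N| * (|B - z| + 1) :=
      le_mul_of_one_le_left (by positivity) (Int.one_le_abs hN)
    linarith [le_abs_self (B - z)]
  · rw [add_sub_cancel_left]
    exact (self_dvd_abs N).mul_right _

theorem isAdmissibleCoefficient_pow {m q₁ q₂ q₃ : ℕ} {c : ℤ} (hm : Odd m) (hc : 1 < c)
    (heven : Even c) (hq₁ : IsResiduePrime m q₁) (hq₂ : IsResiduePrime m q₂)
    (hq₃ : IsResiduePrime m q₃) (h₁ : c ≡ 1 + q₁ [ZMOD (q₁ : ℤ) ^ 2])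
    (h₂ : c ≡ -1 + q₂ [ZMOD (q₂ : ℤ) ^ 2]) (h₃ : ¬ IsSquare (c : ZMod q₃)) :
    IsAdmissibleCoefficient m m (c ^ m) := by
  have hm0 : m ≠ 0 := hm.pos.ne'
  have hndvd {q : ℕ} (hq : IsResiduePrime m q) : ¬ (q : ℤ) ∣ m := fun h =>
    hq.not_dvd hm0 ((Int.natCast_dvd_natCast.1 h).mul_left 12)
  refine ⟨one_lt_pow₀ hc hm0, heven.pow_of_ne_zero hm0, ⟨q₁, hq₁, ?_⟩, ⟨q₂, hq₂, ?_⟩, q₃, hq₃, ?_⟩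
  · exact exists_pow_sub_one_eq_mul (t := 1) hq₁.prime_intCast (by simpa using h₁)
      hq₁.prime_intCast.not_dvd_one (hndvd hq₁)
  · obtain ⟨u, hu, hqu⟩ := exists_pow_sub_one_eq_mul (c := -c) (t := -1) hq₂.prime_intCast
      (by simpa [add_comm] using h₂.neg) (by simpa using hq₂.prime_intCast.not_dvd_one)
      (hndvd hq₂)
    have hv : c ^ m + 1 = q₂ * -u := by rw [hm.neg_pow] at hu; linear_combination -hu
    refine ⟨-u, hv, by rwa [dvd_neg], c ^ m, ?_⟩
    obtain ⟨k, rfl⟩ := hm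
    have hsq : (c ^ (2 * k + 1)) ^ 2 ≡ 1 [ZMOD (c ^ (2 * k + 1) - 1) * -u] :=
      (Int.modEq_iff_dvd.2 ⟨q₂, by linear_combination (c ^ (2 * k + 1) - 1) * hv⟩).symm
    convert hsq.pow (k + 1) using 1 <;> ring
  · rw [Int.cast_pow]
    have := Fact.mk hq₃.prime
    exact fun h => h₃ (isSquare_of_isSquare_pow_of_odd hm h)

theorem isCoprime_natCast_of_prime_of_lt {p q : ℕ} (hp : p.Prime) (hq : q.Prime) (h : p < q) :
    IsCoprime (p : ℤ) q :=
  Nat.isCoprime_iff_coprime.2 ((Nat.coprime_primes hp hq).2 h.ne)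

theorem exists_isAdmissibleCoefficient_pow {m : ℕ} (hm : Odd m) :
    ∃ c : ℤ, 1 < c ∧ IsAdmissibleCoefficient m m (c ^ m) := by
  obtain ⟨q₁, -, hq₁⟩ := exists_isResiduePrime_gt hm.pos.ne' 0
  obtain ⟨q₂, hlt₁₂, hq₂⟩ := exists_isResiduePrime_gt hm.pos.ne' q₁
  obtain ⟨q₃, hlt₂₃, hq₃⟩ := exists_isResiduePrime_gt hm.pos.ne' q₂
  obtain ⟨g, hg⟩ := hq₃.exists_not_isSquare
  have htwo {q : ℕ} (hq : IsResiduePrime m q) : IsCoprime (q : ℤ) 2 :=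
    (isCoprime_natCast_of_prime_of_lt Nat.prime_two hq.prime
      (by have := hq.twelve_lt; omega)).symm
  obtain ⟨z, hz⟩ := exists_forall_modEq_of_pairwise_isCoprime
    (l := [((q₁ : ℤ) ^ 2, 1 + q₁), ((q₂ : ℤ) ^ 2, -1 + q₂), (q₃, g), (2, 0)]) <| by
      simp [IsCoprime.pow_left_iff, IsCoprime.pow_right_iff, htwo hq₁, htwo hq₂, htwo hq₃,
        isCoprime_natCast_of_prime_of_lt hq₁.prime hq₂.prime hlt₁₂,
        isCoprime_natCast_of_prime_of_lt hq₁.prime hq₃.prime (hlt₁₂.trans hlt₂₃),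
        isCoprime_natCast_of_prime_of_lt hq₂.prime hq₃.prime hlt₂₃]
  have hN : (q₁ ^ 2 * (q₂ ^ 2 * (q₃ * 2)) : ℤ) ≠ 0 := by
    have := hq₁.prime.pos
    have := hq₂.prime.pos
    have := hq₃.prime.pos
    positivity
  obtain ⟨c, hc, hcz⟩ := exists_gt_modEq hN 1 z
  simp only [List.forall_mem_cons, List.not_mem_nil, false_imp_iff, imp_true_iff, and_true] at hz
  obtain ⟨h₁, h₂, h₃, h0⟩ := hz
  refine ⟨c, hc, isAdmissibleCoefficient_pow hm hc ?_ hq₁ hq₂ hq₃ (hcz.of_mul_right _ |>.trans h₁)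
    ((hcz.of_mul_left _).of_mul_right _ |>.trans h₂) ?_⟩
  · exact even_iff_two_dvd.2 <| Int.modEq_zero_iff_dvd.1 <|
      (((hcz.of_mul_left _).of_mul_left _).of_mul_left _).trans h0
  · rwa [(ZMod.intCast_eq_intCast_iff _ _ q₃).2
      ((((hcz.of_mul_left _).of_mul_left _).of_mul_right _).trans h₃)]

theorem isAdmissibleCoefficient_sub_one {n q₁ q₂ q₃ : ℕ} (hq₁ : IsResiduePrime (2 * n) q₁)
    (hq₂ : IsResiduePrime (2 * n) q₂) (hq₃ : IsResiduePrime (2 * n) q₃)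
    (h₁ : (q₂ : ℤ) ≡ 2 + q₁ [ZMOD (q₁ : ℤ) ^ 2]) (h₃ : ¬ IsSquare ((q₂ - 1 : ℤ) : ZMod q₃)) :
    IsAdmissibleCoefficient (2 * n) n (q₂ - 1) := by
  have hlt := hq₂.twelve_lt
  refine ⟨by omega, ?_, ⟨q₁, hq₁, ?_⟩, ⟨q₂, hq₂, 1, by ring, hq₂.prime_intCast.not_dvd_one, 1, ?_⟩,
    q₃, hq₃, h₃⟩
  · have hodd := hq₂.prime.odd_of_ne_two (by omega)
    exact_mod_cast (hodd.natCast (R := ℤ)).sub_odd odd_one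
  · obtain ⟨k, hk⟩ := h₁.symm.dvd
    refine ⟨1 + q₁ * k, by linear_combination hk, fun h => ?_⟩
    exact hq₁.prime_intCast.not_dvd_one ((dvd_add_left (dvd_mul_right _ _)).1 h)
  · simpa using Int.modEq_sub (q₂ - 1 : ℤ) 1

theorem exists_prime_gt_forall_modEq {l : List (ℤ × ℤ)} (B : ℕ)
    (h : l.Pairwise fun x y => IsCoprime x.1 y.1)
    (hl : ∀ p ∈ l, p.1 ≠ 0 ∧ IsCoprime p.2 p.1) :
    ∃ q > B, q.Prime ∧ ∀ p ∈ l, (q : ℤ) ≡ p.2 [ZMOD p.1] := by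
  obtain ⟨z, hz⟩ := exists_forall_modEq_of_pairwise_isCoprime h
  set N := (l.map fun p => p.1.natAbs).prod
  have hN : N ≠ 0 := List.prod_ne_zero (by simpa using fun x hx => (hl _ hx).1 rfl)
  have hzN : IsCoprime z N := by
    rw [Int.isCoprime_iff_nat_coprime, Int.natAbs_natCast, Nat.coprime_list_prod_right_iff]
    simp only [List.forall_mem_map]
    exact fun p hp => Int.isCoprime_iff_nat_coprime.1 (isCoprime_of_modEq (hz p hp) (hl p hp).2)
  obtain ⟨q, hB, hq, hmod⟩ := Nat.forall_exists_prime_gt_and_zmodEq B hN hzN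
  refine ⟨q, hB, hq, fun p hp => (hmod.of_dvd ?_).trans (hz p hp)⟩
  exact Int.dvd_natCast.2 (List.dvd_prod (List.mem_map_of_mem hp))

theorem exists_isAdmissibleCoefficient_gt {n : ℕ} (hn : n ≠ 0) (B : ℕ) :
    ∃ W : ℤ, B < W ∧ IsAdmissibleCoefficient (2 * n) n W := by
  have hn2 : 2 * n ≠ 0 := by omega
  obtain ⟨q₁, -, hq₁⟩ := exists_isResiduePrime_gt hn2 0
  obtain ⟨q₃, hlt, hq₃⟩ := exists_isResiduePrime_gt hn2 q₁
  have := Fact.mk hq₃.prime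
  obtain ⟨g, hg⟩ := hq₃.exists_not_isSquare
  have hcop {q : ℕ} (hq : IsResiduePrime (2 * n) q) : IsCoprime (q : ℤ) (12 * (2 * n) : ℕ) :=
    Nat.isCoprime_iff_coprime.2 (hq.prime.coprime_iff_not_dvd.2 (hq.not_dvd hn2))
  have hc₁ : IsCoprime (2 + q₁ : ℤ) q₁ := by
    simpa using (isCoprime_natCast_of_prime_of_lt Nat.prime_two hq₁.prime
      (by have := hq₁.twelve_lt; omega)).add_mul_right_left 1
  have hc₃ : IsCoprime (1 + g) q₃ := by
    refine ((Prime.coprime_iff_not_dvd hq₃.prime_intCast).2 fun h => hg ?_).symm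
    have h0 := (ZMod.intCast_zmod_eq_zero_iff_dvd _ q₃).2 h
    push_cast at h0
    exact (eq_neg_of_add_eq_zero_right h0) ▸ hq₃.isSquare_neg_one
  obtain ⟨q₂, hB, hprime, hmod⟩ := exists_prime_gt_forall_modEq (B + 1)
    (l := [((q₁ : ℤ) ^ 2, 2 + q₁), ((q₃ : ℤ), 1 + g), ((12 * (2 * n) : ℕ), 1)])
    (by
      simp only [List.pairwise_cons, List.forall_mem_cons, List.not_mem_nil, false_imp_iff,
        imp_true_iff, and_true, List.Pairwise.nil, IsCoprime.pow_left_iff two_pos]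
      exact ⟨⟨isCoprime_natCast_of_prime_of_lt hq₁.prime hq₃.prime hlt, hcop hq₁⟩, hcop hq₃⟩)
    (by simp [hq₁.prime.ne_zero, hq₃.prime.ne_zero, hn, hc₁.pow_right, hc₃, isCoprime_one_left])
  simp only [List.forall_mem_cons, List.not_mem_nil, false_imp_iff, imp_true_iff, and_true] at hmod
  obtain ⟨h₁, h₃, h₁₂⟩ := hmod
  have hq₂ : IsResiduePrime (2 * n) q₂ :=
    ⟨hprime, (Nat.modEq_iff_dvd' hprime.one_lt.le).1 (Int.natCast_modEq_iff.1 h₁₂).symm⟩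
  refine ⟨q₂ - 1, by omega, isAdmissibleCoefficient_sub_one hq₁ hq₂ hq₃ h₁ ?_⟩
  have hcast := (ZMod.intCast_eq_intCast_iff _ _ q₃).2 (h₃.sub_right 1)
  rwa [hcast, add_sub_cancel_left]

/-! ### Squarefree parts of radicands -/

theorem GoodRankMsq.abs_le {m : ℕ} {X : ℝ} {d : ℤ} (h : GoodRankMsq m X d) : (|d| : ℝ) ≤ X := by
  obtain ⟨hd, hsq, hgood⟩ := h
  obtain ⟨K, _, _, hx, hK⟩ := exists_imaginary_quadratic_field hd
  exact le_trans (mod_cast abs_le_abs_discr hd hsq hx hK) (hgood K hx hK).1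

theorem GoodRankMsq.mono {m : ℕ} {X Y : ℝ} {d : ℤ} (h : GoodRankMsq m X d) (hXY : X ≤ Y) :
    GoodRankMsq m Y d :=
  ⟨h.1, h.2.1, fun K _ _ hx hK => ⟨(h.2.2 K hx hK).1.trans hXY, (h.2.2 K hx hK).2⟩⟩

theorem finite_setOf_goodRankMsq (m : ℕ) (X : ℝ) : {d : ℤ | GoodRankMsq m X d}.Finite := by
  refine (Set.finite_Icc (-⌊X⌋) ⌊X⌋).subset fun d hd => abs_le.1 (Int.le_floor.2 ?_)
  exact_mod_cast GoodRankMsq.abs_le hd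

theorem monotone_ncard_setOf_goodRankMsq (m : ℕ) :
    Monotone fun X : ℝ => ({d : ℤ | GoodRankMsq m X d}.ncard : ℝ) := fun _ Y hXY =>
  Nat.cast_le.2 <|
    Set.ncard_le_ncard (fun _ hd => GoodRankMsq.mono hd hXY) (finite_setOf_goodRankMsq m Y)

theorem HasClassRankTwo.goodRankMsq {m : ℕ} {X : ℝ} {d : ℤ} (h : HasClassRankTwo m d) (hd : d < 0)
    (hsq : Squarefree d) (hX : ((4 * |d| : ℤ) : ℝ) ≤ X) : GoodRankMsq m X d := by
  refine ⟨hd, hsq, fun K _ _ hx hK => ⟨le_trans ?_ hX, h K hx hK⟩⟩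
  exact_mod_cast abs_discr_le_four_mul_abs hd hx hK

theorem exists_squarefree_mul_mul_self {N : ℤ} (hN : 0 < N) :
    ∃ e y : ℤ, 0 < e ∧ Squarefree e ∧ N = e * (y * y) := by
  obtain ⟨e, y, h, hsq⟩ := Nat.sq_mul_squarefree N.toNat
  refine ⟨e, y, mod_cast Nat.pos_of_ne_zero hsq.ne_zero, Int.squarefree_natCast.2 hsq, ?_⟩
  rw [← Int.toNat_of_nonneg hN.le, ← h]
  push_cast
  ring

/-- `-e` agrees up to a square factor with the radicand `-(W * R * S)` attached to the positive
solution `(R, S)` of `W * R + S = aⁿ`, `R + W * S = bⁿ`. -/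
def IsSolutionRadicand (n : ℕ) (W a b e : ℤ) : Prop :=
  ∃ R S y : ℤ, 0 < R ∧ 0 < S ∧ W * R + S = a ^ n ∧ R + W * S = b ^ n ∧ W * R * S = e * (y * y)

theorem IsSolutionRadicand.swap {n : ℕ} {W a b e : ℤ} (h : IsSolutionRadicand n W a b e) :
    IsSolutionRadicand n W b a e := by
  obtain ⟨R, S, y, hR, hS, hleft, hright, hrad⟩ := h
  exact ⟨S, R, y, hS, hR, by rw [← hright, add_comm], by rw [← hleft, add_comm],
    by rw [← hrad, mul_right_comm]⟩

theorem IsClassRankTwoModulus.exists_goodRankMsq {m n : ℕ} {X : ℝ} {W M b₀ a b : ℤ}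
    (h : IsClassRankTwoModulus m n W M b₀) (hW : 1 < W) (ha : a ≡ 1 [ZMOD M])
    (hb : b ≡ b₀ [ZMOD M]) (hab : IsCoprime a b) (hlt : b ^ n < W * a ^ n)
    (hlt' : a ^ n < W * b ^ n) (hX : ((4 * (a ^ n * b ^ n) : ℤ) : ℝ) ≤ X) :
    ∃ e, IsSolutionRadicand n W a b e ∧ GoodRankMsq m X (-e) := by
  obtain ⟨R, S, hR, hS, hleft, hright, hrank⟩ := h a b ha hb hab hlt hlt'
  have hpos : 0 < W * R * S := by positivity
  obtain ⟨e, y, he, hsq, hrad⟩ := exists_squarefree_mul_mul_self hpos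
  refine ⟨e, ⟨R, S, y, hR, hS, hleft, hright, hrad⟩, HasClassRankTwo.goodRankMsq
    (HasClassRankTwo.of_mul_mul_self (y := y) (by rwa [neg_mul, ← hrad])) (neg_lt_zero.2 he)
    (hsq.squarefree_of_dvd (neg_dvd.2 dvd_rfl)) (le_trans (Int.cast_le.2 ?_) hX)⟩
  have hS_le : S ≤ b ^ n := by nlinarith
  rw [abs_neg, abs_of_pos he]
  refine mul_le_mul_of_nonneg_left ?_ zero_le_four
  calc e ≤ W * R * S := Int.le_of_dvd hpos ⟨y * y, hrad⟩
    _ ≤ a ^ n * b ^ n := mul_le_mul (by linarith) hS_le hS.le (by nlinarith)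

/-! ### Counting radicands: even exponents -/

theorem eq_zero_of_dvd_of_sq_add_mul_sq_eq {A P Z e : ℤ} (hA : A ≠ 0) (he : 1 < e) (hP : A ∣ P)
    (h : Z ^ 2 + e * P ^ 2 = A ^ 2) : P = 0 := by
  obtain ⟨t, rfl⟩ := hP
  by_contra ht
  have hA2 : 0 < A ^ 2 := by positivity
  have ht2 : 0 < t ^ 2 := by have := right_ne_zero_of_mul ht; positivity
  nlinarith [sq_nonneg Z, mul_pos hA2 ht2]

theorem sq_eq_sq_of_sq_add_mul_sq_eq {l e x y x' y' : ℤ} {k : ℕ} (hl : Prime l) (hl2 : ¬ l ∣ 2)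
    (hk : k ≠ 0) (he : 1 < e) (hx : ¬ l ∣ x) (hx' : ¬ l ∣ x')
    (h : x ^ 2 + e * y ^ 2 = (l ^ k) ^ 2) (h' : x' ^ 2 + e * y' ^ 2 = (l ^ k) ^ 2) :
    x ^ 2 = x' ^ 2 := by
  have hA : l ^ k ≠ 0 := pow_ne_zero _ hl.ne_zero
  have hprod : (x * y' - x' * y) * (x * y' + x' * y) = (l ^ k) ^ 2 * (y' ^ 2 - y ^ 2) := by
    linear_combination y' ^ 2 * h - y ^ 2 * h'
  have hdvd : l ^ (k * 2) ∣ (x * y' - x' * y) * (x * y' + x' * y) :=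
    ⟨y' ^ 2 - y ^ 2, by rw [hprod, pow_mul]⟩
  have hy' : ¬ l ∣ y' := fun hdvd => hx' <| hl.dvd_of_dvd_pow (n := 2) <| by
    rw [eq_sub_of_add_eq h']
    exact dvd_sub (dvd_pow (dvd_pow_self l hk) two_ne_zero) ((dvd_pow hdvd two_ne_zero).mul_left e)
  -- `l` divides at most one factor, so `(l ^ k) ^ 2` divides the other, which then vanishes by
  -- composing the two representations.
  have hzero : (x * y' - x' * y) * (x * y' + x' * y) = 0 := by
    by_cases hminus : l ∣ x * y' - x' * y
    · have hplus : ¬ l ∣ x * y' + x' * y := fun hplus => by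
        have hsum : l ∣ 2 * (x * y') := (dvd_add hminus hplus).trans ⟨1, by ring⟩
        exact (hl.dvd_or_dvd hsum).elim hl2 fun hxy => (hl.dvd_or_dvd hxy).elim hx hy'
      refine mul_eq_zero_of_left (eq_zero_of_dvd_of_sq_add_mul_sq_eq (A := (l ^ k) ^ 2)
        (Z := x * x' + e * y * y') (pow_ne_zero 2 hA) he ?_ ?_) _
      · rw [← pow_mul]
        exact hl.pow_dvd_of_dvd_mul_right _ hplus hdvd
      · linear_combination (x' ^ 2 + e * y' ^ 2) * h + (l ^ k) ^ 2 * h'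
    · refine mul_eq_zero_of_right _ (eq_zero_of_dvd_of_sq_add_mul_sq_eq (A := (l ^ k) ^ 2)
        (Z := x * x' - e * y * y') (pow_ne_zero 2 hA) he ?_ ?_)
      · rw [← pow_mul]
        exact hl.pow_dvd_of_dvd_mul_left _ hminus hdvd
      · linear_combination (x' ^ 2 + e * y' ^ 2) * h + (l ^ k) ^ 2 * h'
  have hyy : y' ^ 2 - y ^ 2 = 0 :=
    (mul_eq_zero.1 (hprod.symm.trans hzero)).resolve_left (pow_ne_zero 2 hA)
  linear_combination h - h' + e * hyy

theorem IsSolutionRadicand.exists_sq_add_mul_sq_eq {n : ℕ} {W a b e : ℤ}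
    (h : IsSolutionRadicand n W a b e) :
    ∃ x y : ℤ, x ^ 2 + 4 * e * y ^ 2 = (a ^ n) ^ 2 ∧
      (W ^ 2 - 1) * x = (W ^ 2 + 1) * a ^ n - 2 * W * b ^ n := by
  obtain ⟨R, S, y, -, -, hleft, hright, hrad⟩ := h
  refine ⟨W * R - S, y, ?_, ?_⟩
  · rw [← hleft]
    linear_combination (-4) * hrad
  · rw [← hleft, ← hright]
    ring

theorem not_dvd_of_mul_eq_sub_mul_pow {l a b W x : ℤ} {n : ℕ} (hl : Prime l) (hn : n ≠ 0)
    (hl2 : ¬ l ∣ 2) (hW : ¬ l ∣ W) (ha : l ∣ a) (hb : ¬ l ∣ b)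
    (h : (W ^ 2 - 1) * x = (W ^ 2 + 1) * a ^ n - 2 * W * b ^ n) : ¬ l ∣ x := fun hx => by
  have hdvd : l ∣ 2 * W * b ^ n := by
    rw [← sub_eq_iff_eq_add.2 (sub_eq_iff_eq_add'.1 h.symm)]
    exact dvd_sub ((dvd_pow ha hn).mul_left _) (hx.mul_left _)
  rcases hl.dvd_or_dvd hdvd with h2W | hbn
  · exact (hl.dvd_or_dvd h2W).elim hl2 hW
  · exact hb (hl.dvd_of_dvd_pow hbn)

theorem IsSolutionRadicand.pos {n : ℕ} {W a b e : ℤ} (hW : 0 < W)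
    (h : IsSolutionRadicand n W a b e) : 0 < e := by
  obtain ⟨R, S, y, hR, hS, -, -, hrad⟩ := h
  have hpos : 0 < e * (y * y) := hrad ▸ by positivity
  exact pos_of_mul_pos_left hpos (mul_self_nonneg y)

theorem IsSolutionRadicand.eq_of_prime_pow {n k : ℕ} {W l b b' e : ℤ} (hn : n ≠ 0) (hk : k ≠ 0)
    (hW : 1 < W) (hl : Prime l) (hl2 : ¬ l ∣ 2) (hlW : l ≡ 1 [ZMOD W]) (hb : ¬ l ∣ b)
    (hb' : ¬ l ∣ b') (hb0 : 0 ≤ b) (hb0' : 0 ≤ b') (h : IsSolutionRadicand n W (l ^ k) b e)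
    (h' : IsSolutionRadicand n W (l ^ k) b' e) : b = b' := by
  have hWunit : ¬ IsUnit W := fun hu => by have := Int.isUnit_iff.1 hu; omega
  have hcop : IsCoprime (l ^ k) W := (isCoprime_of_modEq hlW isCoprime_one_left).pow_left
  have hlnW : ¬ l ∣ W := fun hdvd => hl.not_isUnit <|
    (isCoprime_of_modEq hlW isCoprime_one_left).isUnit_of_dvd' dvd_rfl hdvd
  have he := h.pos (by omega)
  obtain ⟨x, y, hxy, hx⟩ := h.exists_sq_add_mul_sq_eq
  obtain ⟨x', y', hxy', hx'⟩ := h'.exists_sq_add_mul_sq_eq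
  have hsq : x ^ 2 = x' ^ 2 := by
    rw [← pow_mul l] at hxy hxy'
    exact sq_eq_sq_of_sq_add_mul_sq_eq (e := 4 * e) hl hl2 (mul_ne_zero hk hn) (by omega)
      (not_dvd_of_mul_eq_sub_mul_pow hl hn hl2 hlnW (dvd_pow_self l hk) hb hx)
      (not_dvd_of_mul_eq_sub_mul_pow hl hn hl2 hlnW (dvd_pow_self l hk) hb' hx') hxy hxy'
  rcases sq_eq_sq_iff_eq_or_eq_neg.1 hsq with rfl | rfl
  · have hpow : b ^ n = b' ^ n :=
      mul_left_cancel₀ (show 2 * W ≠ 0 by omega) (by linear_combination hx - hx')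
    exact (pow_left_inj₀ hb0 hb0' hn).1 hpow
  · have hdvd : W ∣ (l ^ k) ^ n := ⟨b ^ n + b' ^ n - W * (l ^ k) ^ n, by
      refine mul_left_cancel₀ two_ne_zero ?_
      linear_combination -hx - hx'⟩
    exact absurd (hcop.pow_left.isUnit_of_dvd' hdvd dvd_rfl) hWunit

theorem sub_le_mul_card_filter_modEq_add_one {r : ℤ} (hr : 0 < r) (a b s : ℤ) :
    b - a ≤ r * (({x ∈ Finset.Ico a b | x ≡ s [ZMOD r]}.card : ℤ) + 1) := by
  have hr' : (0 : ℚ) < r := Int.cast_pos.2 hr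
  have hle : ⌈((b : ℚ) - s) / r⌉ - ⌈((a : ℚ) - s) / r⌉ ≤
      ({x ∈ Finset.Ico a b | x ≡ s [ZMOD r]}.card : ℤ) :=
    (le_max_left _ 0).trans (Int.Ico_filter_modEq_card a b hr s).ge
  have hle' : (⌈((b : ℚ) - s) / r⌉ : ℚ) - ⌈((a : ℚ) - s) / r⌉ ≤
      ({x ∈ Finset.Ico a b | x ≡ s [ZMOD r]}.card : ℤ) := mod_cast hle
  have hdiv : ((b : ℚ) - a) / r ≤ ({x ∈ Finset.Ico a b | x ≡ s [ZMOD r]}.card : ℤ) + 1 := by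
    have hsub : ((b : ℚ) - a) / r = (b - s) / r - (a - s) / r := by ring
    linarith [Int.le_ceil (((b : ℚ) - s) / r), Int.ceil_lt_add_one (((a : ℚ) - s) / r)]
  rw [div_le_iff₀' hr'] at hdiv
  exact_mod_cast hdiv

theorem IsClassRankTwoModulus.pow_le_mul_ncard_add_one {m n k l : ℕ} {X : ℝ} {W M b₀ s : ℤ}
    (h : IsClassRankTwoModulus m n W M b₀) (hn : n ≠ 0) (hk : k ≠ 0) (hW : 2 ^ n < W) (hM : 0 < M)
    (hWM : W ∣ M) (hl : l.Prime) (hl2 : ¬ (l : ℤ) ∣ 2) (hlM : l ≡ 1 [ZMOD M])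
    (hs : s ≡ b₀ [ZMOD M]) (hsl : s ≡ 1 [ZMOD l]) (hX : 4 * 2 ^ n * ((l : ℝ) ^ k) ^ (2 * n) ≤ X) :
    (l : ℤ) ^ k ≤ M * l * ({d : ℤ | GoodRankMsq m X d}.ncard + 1) := by
  have hlprime : Prime (l : ℤ) := Nat.prime_iff_prime_int.1 hl
  have hl0 : 0 < (l : ℤ) := mod_cast hl.pos
  have ha0 : 0 < (l : ℤ) ^ k := by positivity
  have hW1 : 1 < W := (one_le_pow₀ one_le_two).trans_lt hW
  have hndvd {b : ℤ} (hb : b ≡ s [ZMOD M * l]) : ¬ (l : ℤ) ∣ b := fun hdvd =>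
    hlprime.not_isUnit <| (isCoprime_of_modEq ((hb.of_dvd (dvd_mul_left _ _)).trans hsl)
      isCoprime_one_left).isUnit_of_dvd' hdvd dvd_rfl
  have hcard : {x ∈ Finset.Ico ((l : ℤ) ^ k) (2 * l ^ k) | x ≡ s [ZMOD M * l]}.card ≤
      (finite_setOf_goodRankMsq m X).toFinset.card := by
    refine Finset.card_le_card_of_forall_subsingleton
      (fun b d => IsSolutionRadicand n W (l ^ k) b (-d)) (fun b hb => ?_) ?_
    · obtain ⟨⟨hab, hba⟩, hbs⟩ := by simpa only [Finset.mem_filter, Finset.mem_Ico] using hb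
      have hpow : ((l : ℤ) ^ k) ^ n ≤ b ^ n := pow_le_pow_left₀ ha0.le hab n
      have hpow' : b ^ n ≤ 2 ^ n * ((l : ℤ) ^ k) ^ n := by
        rw [← mul_pow]
        exact pow_le_pow_left₀ (ha0.le.trans hab) hba.le n
      have hapow : 0 < ((l : ℤ) ^ k) ^ n := by positivity
      have hbound : 4 * (((l : ℤ) ^ k) ^ n * b ^ n) ≤ 4 * 2 ^ n * (l ^ k) ^ (2 * n) := by
        rw [two_mul, pow_add]
        nlinarith
      obtain ⟨e, he, hgood⟩ := h.exists_goodRankMsq (X := X) hW1 (by simpa using hlM.pow k)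
        ((hbs.of_dvd (dvd_mul_right _ _)).trans hs)
        ((hlprime.coprime_iff_not_dvd.2 (hndvd hbs)).pow_left) (by nlinarith) (by nlinarith)
        (le_trans (mod_cast hbound) hX)
      exact ⟨-e, (Set.Finite.mem_toFinset _).2 hgood, by rwa [neg_neg]⟩
    · rintro d - b ⟨hb, hbd⟩ b' ⟨hb', hbd'⟩
      obtain ⟨⟨hab, -⟩, hbs⟩ := by simpa only [Finset.mem_filter, Finset.mem_Ico] using hb
      obtain ⟨⟨hab', -⟩, hbs'⟩ := by simpa only [Finset.mem_filter, Finset.mem_Ico] using hb'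
      exact hbd.eq_of_prime_pow hn hk hW1 hlprime hl2 (hlM.of_dvd hWM) (hndvd hbs) (hndvd hbs')
        (ha0.le.trans hab) (ha0.le.trans hab') hbd'
  rw [← Set.ncard_eq_toFinset_card _ (finite_setOf_goodRankMsq m X)] at hcard
  have hinterval := sub_le_mul_card_filter_modEq_add_one (mul_pos hM hl0) ((l : ℤ) ^ k)
    (2 * l ^ k) s
  calc (l : ℤ) ^ k = 2 * l ^ k - l ^ k := by ring
    _ ≤ _ := hinterval
    _ ≤ _ := mul_le_mul_of_nonneg_left (by gcongr) (mul_pos hM hl0).le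

theorem exists_forall_prime_pow_le_mul_ncard_add_one {n : ℕ} (hn : n ≠ 0) :
    ∃ C l : ℕ, 0 < C ∧ 1 < l ∧ ∀ k ≠ 0, ∀ X : ℝ, C * ((l : ℝ) ^ k) ^ (2 * n) ≤ X →
      (l : ℝ) ^ k ≤ C * ({d : ℤ | GoodRankMsq (2 * n) X d}.ncard + 1) := by
  obtain ⟨W, hW, hWadm⟩ := exists_isAdmissibleCoefficient_gt hn (2 ^ n)
  push_cast at hW
  obtain ⟨M, b₀, hM, hWM, -, -, hmod⟩ := hWadm.exists_isClassRankTwoModulus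
    (mul_ne_zero two_ne_zero hn) hn (dvd_mul_left n 2) dvd_rfl
  obtain ⟨l, hlgt, hl, hlmod⟩ := exists_prime_gt_forall_modEq (l := [(M, 1)]) 2
    (List.pairwise_singleton _ _) (by simpa [isCoprime_one_left] using hM.ne')
  have hlM : (l : ℤ) ≡ 1 [ZMOD M] := hlmod _ (List.mem_singleton_self _)
  have hl2 : ¬ (l : ℤ) ∣ 2 := fun hdvd => by have := Int.le_of_dvd two_pos hdvd; omega
  obtain ⟨s, hs⟩ := exists_forall_modEq_of_pairwise_isCoprime (l := [(M, b₀), ((l : ℤ), 1)])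
    (by simpa using (isCoprime_of_modEq hlM isCoprime_one_left).symm)
  simp only [List.forall_mem_cons, List.not_mem_nil, false_implies, implies_true, and_true] at hs
  have hlpos := hl.pos
  lift M to ℕ using hM.le
  have hMpos : 0 < M := mod_cast hM
  have hMl : 1 ≤ (M : ℝ) * l := mod_cast Nat.mul_pos hMpos hlpos
  refine ⟨4 * 2 ^ n * (M * l), l, by positivity, hl.one_lt, fun k hk X hX => ?_⟩
  push_cast at hX ⊢
  have hcount := hmod.pow_le_mul_ncard_add_one hn hk hW hM hWM hl hl2 hlM hs.1 hs.2 (X := X)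
    (le_trans (mul_le_mul_of_nonneg_right (le_mul_of_one_le_right (by positivity) hMl)
      (by positivity)) hX)
  have hcount' : (l : ℝ) ^ k ≤ M * l * ({d : ℤ | GoodRankMsq (2 * n) X d}.ncard + 1) :=
    mod_cast hcount
  refine hcount'.trans (mul_le_mul_of_nonneg_right (le_mul_of_one_le_left (by positivity) ?_)
    (by positivity))
  exact one_le_mul_of_one_le_of_one_le (by norm_num) (one_le_pow₀ one_le_two)

open Filter in
theorem exists_eventually_mul_rpow_le_of_pow_le {f : ℝ → ℝ} {C L : ℝ} {m : ℕ} (hm : m ≠ 0)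
    (hC : 0 < C) (hL : 1 < L)
    (h : ∀ k ≠ 0, ∀ X, C * (L ^ k) ^ m ≤ X → L ^ k ≤ C * (f X + 1)) :
    ∃ c > 0, ∀ᶠ X in atTop, c * X ^ (1 / (m : ℝ)) ≤ f X := by
  have : 0 < L := one_pos.trans hL
  have hY : Tendsto (fun X : ℝ => (X / C) ^ (1 / (m : ℝ))) atTop atTop :=
    (tendsto_rpow_atTop (by positivity)).comp (tendsto_id.atTop_div_const hC)
  refine ⟨1 / (2 * L * C * C ^ (1 / (m : ℝ))), by positivity, ?_⟩
  filter_upwards [eventually_gt_atTop 0, hY.eventually_ge_atTop L,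
    hY.eventually_ge_atTop (2 * L * C)] with X hX hLY hCY
  set Y := (X / C) ^ (1 / (m : ℝ)) with hYdef
  have hYm : Y ^ m = X / C := by
    rw [hYdef, one_div, Real.rpow_inv_natCast_pow (by positivity) hm]
  have hXm : X ^ (1 / (m : ℝ)) = Y * C ^ (1 / (m : ℝ)) := by
    rw [hYdef, ← Real.mul_rpow (by positivity) hC.le, div_mul_cancel₀ _ hC.ne']
  obtain ⟨k, hkY, hYk⟩ := exists_nat_pow_near (hL.le.trans hLY) hL
  have hk : k ≠ 0 := by
    rintro rfl
    rw [zero_add, pow_one] at hYk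
    exact hYk.not_ge hLY
  have hbound := h k hk X <| by
    rw [mul_comm, ← le_div_iff₀ hC, ← hYm]
    exact pow_le_pow_left₀ (by positivity) hkY m
  have hlt : Y / (L * C) < f X + 1 := by
    rw [div_lt_iff₀ (by positivity)]
    calc Y < L ^ k * L := by rwa [← pow_succ]
      _ ≤ C * (f X + 1) * L := by gcongr
      _ = (f X + 1) * (L * C) := by ring
  have hone : 1 ≤ Y / (2 * L * C) := (one_le_div (by positivity)).2 hCY
  have hhalf : Y / (L * C) = 2 * (Y / (2 * L * C)) := by field_simp
  calc 1 / (2 * L * C * C ^ (1 / (m : ℝ))) * X ^ (1 / (m : ℝ)) = Y / (2 * L * C) := by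
        rw [hXm]
        field_simp
    _ ≤ f X := by linarith

theorem eventually_mul_rpow_div_log_sq_le_ncard_of_even {n : ℕ} (hn : n ≠ 0) :
    ∃ c : ℝ, 0 < c ∧ ∀ᶠ X : ℝ in Filter.atTop,
      c * X ^ (1 / ((2 * n : ℕ) : ℝ)) / Real.log X ^ 2 ≤
        {d : ℤ | GoodRankMsq (2 * n) X d}.ncard := by
  obtain ⟨C, l, hC, hl, hcount⟩ := exists_forall_prime_pow_le_mul_ncard_add_one hn
  obtain ⟨c, hc, hle⟩ := exists_eventually_mul_rpow_le_of_pow_le (mul_ne_zero two_ne_zero hn)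
    (Nat.cast_pos.2 hC) (Nat.one_lt_cast.2 hl) hcount
  refine ⟨c, hc, ?_⟩
  filter_upwards [hle, Filter.eventually_gt_atTop 0,
    Real.tendsto_log_atTop.eventually_ge_atTop 1] with X hX hX0 hlog
  exact (div_le_self (by positivity) (one_le_pow₀ hlog)).trans hX

/-! ### Counting radicands: odd exponents -/

theorem emultiplicity_eq_of_mul_add_eq_pow {p c a b R S : ℤ} {m : ℕ} (hp : Prime p)
    (hE : ¬ p ∣ (c ^ m) ^ 2 - 1) (hm : ¬ p ∣ m) (hcb : ¬ p ∣ c * b) (hdvd : p ∣ c * b - a)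
    (hleft : c ^ m * R + S = a ^ m) (hright : R + c ^ m * S = b ^ m) :
    emultiplicity p S = emultiplicity p (c * b - a) := by
  rw [← emultiplicity_pow_sub_pow_of_prime hp hdvd hcb hm, mul_pow, ← hleft, ← hright,
    show c ^ m * (R + c ^ m * S) - (c ^ m * R + S) = ((c ^ m) ^ 2 - 1) * S by ring,
    emultiplicity_mul hp, emultiplicity_eq_zero.2 hE, zero_add]

theorem dvd_of_dvd_mul_mul_self_of_not_sq_dvd {p e y : ℤ} (hp : Prime p)
    (hdvd : p ∣ e * (y * y)) (hsq : ¬ p ^ 2 ∣ e * (y * y)) : p ∣ e := by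
  refine (hp.dvd_or_dvd hdvd).resolve_right fun hyy => hsq (Dvd.dvd.mul_left ?_ e)
  have hy : p ∣ y := (hp.dvd_or_dvd hyy).elim id id
  exact sq p ▸ mul_dvd_mul hy hy

theorem IsSolutionRadicand.dvd_of_dvd_mul_sub {m : ℕ} {p c a b e : ℤ}
    (h : IsSolutionRadicand m (c ^ m) a b e) (hp : Prime p) (hc : ¬ p ∣ c)
    (hE : ¬ p ∣ (c ^ m) ^ 2 - 1) (hm : ¬ p ∣ m) (hab : IsCoprime a b) (hdvd : p ∣ c * b - a)
    (hsq : ¬ p ^ 2 ∣ c * b - a) : p ∣ e := by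
  obtain ⟨R, S, y, -, -, hleft, hright, hrad⟩ := h
  have hcb : ¬ p ∣ c * b := fun hcb => hp.not_isUnit <|
    hab.isUnit_of_dvd' ((dvd_sub_right hcb).1 hdvd) ((hp.dvd_or_dvd hcb).resolve_left hc)
  have ha : ¬ p ∣ a := fun ha => hcb ((dvd_sub_left ha).1 hdvd)
  have hmult := emultiplicity_eq_of_mul_add_eq_pow hp hE hm hcb hdvd hleft hright
  have hS : p ∣ S := by
    rwa [← pow_one p, pow_dvd_iff_le_emultiplicity, hmult, ← pow_dvd_iff_le_emultiplicity, pow_one]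
  have hS2 : ¬ p ^ 2 ∣ S := by
    rwa [pow_dvd_iff_le_emultiplicity, hmult, ← pow_dvd_iff_le_emultiplicity]
  have hR : ¬ p ∣ R := fun hR => ha <| hp.dvd_of_dvd_pow (hleft ▸ dvd_add (hR.mul_left _) hS)
  have hWR : ¬ p ∣ c ^ m * R := fun hWR =>
    (hp.dvd_or_dvd hWR).elim (fun hW => hc (hp.dvd_of_dvd_pow hW)) hR
  refine dvd_of_dvd_mul_mul_self_of_not_sq_dvd (y := y) hp ?_ ?_
  · exact hrad ▸ hS.mul_left _
  · exact fun hdvd => hS2 (hp.pow_dvd_of_dvd_mul_left 2 hWR (hrad ▸ hdvd))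

theorem exists_pos_le_mul_modEq {p N : ℕ} (hN : 0 < N) (hpN : p.Coprime N) (t : ℤ) :
    ∃ u : ℕ, 0 < u ∧ u ≤ N ∧ p * u ≡ t [ZMOD N] := by
  have hN' : (0 : ℤ) < N := mod_cast hN
  obtain ⟨r, hr⟩ : ∃ r : ℤ, p * r ≡ 1 [ZMOD N] := Int.mod_coprime hpN
  have hnonneg := Int.emod_nonneg (r * t - 1) hN'.ne'
  have hlt := Int.emod_lt_of_pos (r * t - 1) hN'
  refine ⟨((r * t - 1) % N + 1).toNat, by omega, by omega, ?_⟩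
  rw [Int.toNat_of_nonneg (by omega)]
  calc (p : ℤ) * ((r * t - 1) % N + 1) ≡ p * (r * t - 1 + 1) [ZMOD N] :=
        ((Int.mod_modEq _ _).add_right 1).mul_left p
    _ = p * r * t := by ring
    _ ≡ 1 * t [ZMOD N] := hr.mul_right t
    _ = t := one_mul t

theorem exists_le_forall_prime_not_dvd_add_mul {u : ℕ} (hu : u ≠ 0) (v N : ℕ) :
    ∃ x ≤ u, ∀ l : ℕ, l.Prime → l ∣ u → ¬ l ∣ N → ¬ l ∣ v + N * x := by
  refine ⟨∏ l ∈ u.primeFactors with ¬ l ∣ v, l, Nat.le_of_dvd (Nat.pos_of_ne_zero hu) <|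
    (Finset.prod_dvd_prod_of_subset _ _ _ (Finset.filter_subset _ _)).trans
      (Nat.prod_primeFactors_dvd u), fun l hl hlu hlN hdvd => ?_⟩
  by_cases hlv : l ∣ v
  · have hprod := (hl.dvd_mul.1 ((Nat.dvd_add_right hlv).1 hdvd)).resolve_left hlN
    obtain ⟨q, hq, hlq⟩ := (hl.prime.dvd_finsetProd_iff _).1 hprod
    obtain ⟨hq, hqv⟩ := Finset.mem_filter.1 hq
    exact hqv ((Nat.prime_dvd_prime_iff_eq hl (Nat.prime_of_mem_primeFactors hq)).1 hlq ▸ hlv)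
  · have hprod : l ∣ ∏ l ∈ u.primeFactors with ¬ l ∣ v, l := Finset.dvd_prod_of_mem _ <|
      Finset.mem_filter.2 ⟨Nat.mem_primeFactors.2 ⟨hl, hlu, hu⟩, hlv⟩
    exact hlv ((Nat.dvd_add_left (hprod.mul_left N)).1 hdvd)

theorem exists_modEq_and_mul_sub_eq {c M b₀ x y : ℤ}
    (hx : x ≡ c * b₀ - 1 [ZMOD M * (c ^ 2 - 1)]) (hy : y ≡ c - b₀ [ZMOD M * (c ^ 2 - 1)]) :
    ∃ a b : ℤ, a ≡ 1 [ZMOD M] ∧ b ≡ b₀ [ZMOD M] ∧ c * b - a = x ∧ c * a - b = y := by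
  obtain ⟨s, hs⟩ := hx.symm.dvd
  obtain ⟨t, ht⟩ := hy.symm.dvd
  refine ⟨1 + M * (c * t + s), b₀ + M * (t + c * s), ?_, ?_, ?_, ?_⟩
  · simp [Int.ModEq]
  · simp [Int.ModEq]
  · linear_combination -hs
  · linear_combination -ht

theorem isCoprime_of_mul_sub_eq_prime_mul {p q M u v : ℕ} {a b c : ℤ} (hp : p.Prime)
    (hq : q.Prime) (hpq : p ≠ q) (ha : a ≡ 1 [ZMOD M]) (hx : c * b - a = p * u)
    (hy : c * a - b = q * v) (hpv : ¬ p ∣ v) (hqu : ¬ q ∣ u)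
    (huv : ∀ l : ℕ, l.Prime → l ∣ u → ¬ l ∣ M → ¬ l ∣ v) : IsCoprime a b := by
  rw [Int.isCoprime_iff_gcd_eq_one]
  by_contra hgcd
  obtain ⟨l, hl, hdvd⟩ := Nat.exists_prime_and_dvd hgcd
  have hla : (l : ℤ) ∣ a := (Int.natCast_dvd_natCast.2 hdvd).trans (Int.gcd_dvd_left ..)
  have hlb : (l : ℤ) ∣ b := (Int.natCast_dvd_natCast.2 hdvd).trans (Int.gcd_dvd_right ..)
  have hlM : ¬ l ∣ M := fun hlM => (Nat.prime_iff_prime_int.1 hl).not_isUnit <|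
    (isCoprime_of_modEq ha isCoprime_one_left).isUnit_of_dvd' hla (Int.natCast_dvd_natCast.2 hlM)
  have hlpu : l ∣ p * u := by
    exact_mod_cast hx ▸ dvd_sub (hlb.mul_left c) hla
  have hlqv : l ∣ q * v := by
    exact_mod_cast hy ▸ dvd_sub (hla.mul_left c) hlb
  rcases hl.dvd_mul.1 hlpu with hlp | hlu <;> rcases hl.dvd_mul.1 hlqv with hlq | hlv
  · exact hpq (((Nat.prime_dvd_prime_iff_eq hl hp).1 hlp).symm.trans
      ((Nat.prime_dvd_prime_iff_eq hl hq).1 hlq))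
  · exact hpv ((Nat.prime_dvd_prime_iff_eq hl hp).1 hlp ▸ hlv)
  · exact hqu ((Nat.prime_dvd_prime_iff_eq hl hq).1 hlq ▸ hlu)
  · exact huv l hl hlu hlM hlv

theorem exists_isCoprime_and_mul_sub_eq_prime_mul {p q M : ℕ} {c : ℤ} (hM : 0 < M)
    (hcM : c ^ 2 - 1 ∣ (M : ℤ)) (b₀ : ℤ) (hp : p.Prime) (hq : q.Prime) (hpq : p ≠ q)
    (hMp : M ^ 2 + M ^ 4 < p) (hMq : M ^ 2 + M ^ 4 < q) :
    ∃ a b : ℤ, ∃ u v : ℕ, 0 < u ∧ u ≤ M ^ 2 + M ^ 4 ∧ 0 < v ∧ v ≤ M ^ 2 + M ^ 4 ∧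
      a ≡ 1 [ZMOD M] ∧ b ≡ b₀ [ZMOD M] ∧ IsCoprime a b ∧ c * b - a = p * u ∧
      c * a - b = q * v := by
  have hM2 : 0 < M ^ 2 := by positivity
  have hcop {r : ℕ} (hr : r.Prime) (hlt : M ^ 2 + M ^ 4 < r) : r.Coprime (M ^ 2) :=
    Nat.coprime_of_lt_prime hM2.ne' (by omega) hr
  obtain ⟨u, hu, huM, hpu⟩ := exists_pos_le_mul_modEq hM2 (hcop hp hMp) (c * b₀ - 1)
  obtain ⟨v, hv, hvM, hqv⟩ := exists_pos_le_mul_modEq hM2 (hcop hq hMq) (c - b₀)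
  obtain ⟨x, hxu, hx⟩ := exists_le_forall_prime_not_dvd_add_mul hu.ne' v (M ^ 2)
  have hbound : v + M ^ 2 * x ≤ M ^ 2 + M ^ 4 := by
    rw [show M ^ 4 = M ^ 2 * M ^ 2 by ring]
    exact add_le_add hvM (Nat.mul_le_mul_left _ (hxu.trans huM))
  have hmod : (M : ℤ) * (c ^ 2 - 1) ∣ ((M ^ 2 : ℕ) : ℤ) := by
    rw [Nat.cast_pow, sq (M : ℤ)]
    exact mul_dvd_mul_left _ hcM
  have hqv' : (q : ℤ) * (v + M ^ 2 * x : ℕ) ≡ c - b₀ [ZMOD (M ^ 2 : ℕ)] := by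
    refine Int.ModEq.trans ?_ hqv
    rw [Int.modEq_iff_dvd]
    exact ⟨-(q * x), by push_cast; ring⟩
  obtain ⟨a, b, ha, hb, hxeq, hyeq⟩ :=
    exists_modEq_and_mul_sub_eq (hpu.of_dvd hmod) (hqv'.of_dvd hmod)
  refine ⟨a, b, u, v + M ^ 2 * x, hu, by omega, by omega, hbound, ha, hb,
    isCoprime_of_mul_sub_eq_prime_mul hp hq hpq ha hxeq hyeq
      (Nat.not_dvd_of_pos_of_lt (by omega) (by omega)) (Nat.not_dvd_of_pos_of_lt hu (by omega))
      fun l hl hlu hlM => hx l hl hlu fun hdvd => hlM (hl.dvd_of_dvd_pow hdvd), hxeq, hyeq⟩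

theorem pos_and_le_of_mul_sub_eq {a b c x y T : ℤ} (hc : 1 < c) (hx : c * b - a = x)
    (hy : c * a - b = y) (hx0 : 0 < x) (hy0 : 0 < y) (hxT : x ≤ T) (hyT : y ≤ T) :
    0 < a ∧ a ≤ (c + 1) * T := by
  have hprod : (c ^ 2 - 1) * a = c * y + x := by rw [← hx, ← hy]; ring
  have hE : 1 ≤ c ^ 2 - 1 := by nlinarith
  have ha : 0 < a := by
    have : 0 < (c ^ 2 - 1) * a := by rw [hprod]; positivity
    exact pos_of_mul_pos_right this (by omega)
  exact ⟨ha, by nlinarith⟩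

theorem IsClassRankTwoModulus.exists_goodRankMsq_dvd_dvd {m : ℕ} {M b₀ c a b p q u v : ℤ} {X : ℝ}
    (h : IsClassRankTwoModulus m m (c ^ m) M b₀) (hm : m ≠ 0) (hc : 1 < c) (hcM : c ∣ M)
    (hEM : (c ^ m) ^ 2 - 1 ∣ M) (ha : a ≡ 1 [ZMOD M]) (hb : b ≡ b₀ [ZMOD M])
    (hab : IsCoprime a b) (ha0 : 0 < a) (hb0 : 0 < b) (hp : Prime p) (hq : Prime q)
    (hx : c * b - a = p * u) (hy : c * a - b = q * v) (hx0 : 0 < p * u) (hy0 : 0 < q * v)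
    (hpM : ¬ p ∣ M) (hqM : ¬ q ∣ M) (hpm : ¬ p ∣ m) (hqm : ¬ q ∣ m) (hpu : ¬ p ∣ u)
    (hqv : ¬ q ∣ v) (hX : ((4 * (a ^ m * b ^ m) : ℤ) : ℝ) ≤ X) :
    ∃ d : ℤ, GoodRankMsq m X d ∧ p ∣ d ∧ q ∣ d := by
  have hsq {r w : ℤ} (hr : Prime r) (hrw : ¬ r ∣ w) : ¬ r ^ 2 ∣ r * w := by
    rwa [sq, mul_dvd_mul_iff_left hr.ne_zero]
  have hlt {s t : ℤ} (hs : 0 < s) (hst : 0 < c * t - s) : s ^ m < c ^ m * t ^ m := by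
    rw [← mul_pow]
    exact pow_lt_pow_left₀ (by omega) hs.le hm
  obtain ⟨e, he, hgood⟩ := h.exists_goodRankMsq (one_lt_pow₀ hc hm) ha hb hab
    (hlt hb0 (hy ▸ hy0)) (hlt ha0 (hx ▸ hx0)) hX
  refine ⟨-e, hgood, dvd_neg.2 ?_, dvd_neg.2 ?_⟩
  · exact he.dvd_of_dvd_mul_sub hp (fun hpc => hpM (hpc.trans hcM))
      (fun hpE => hpM (hpE.trans hEM)) hpm hab (hx ▸ dvd_mul_right p u) (hx ▸ hsq hp hpu)
  · exact he.swap.dvd_of_dvd_mul_sub hq (fun hqc => hqM (hqc.trans hcM))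
      (fun hqE => hqM (hqE.trans hEM)) hqm hab.symm (hy ▸ dvd_mul_right q v) (hy ▸ hsq hq hqv)

theorem four_mul_pow_mul_pow_le {m : ℕ} {a b T : ℤ} (hm : m ≠ 0) (ha0 : 0 ≤ a) (hb0 : 0 ≤ b)
    (ha : a ≤ T) (hb : b ≤ T) : 4 * (a ^ m * b ^ m) ≤ (2 * T) ^ (2 * m) := by
  have hfour : (4 : ℤ) ≤ 4 ^ m := le_self_pow₀ (by norm_num) hm
  have hT : 0 ≤ T := ha0.trans ha
  calc 4 * (a ^ m * b ^ m) ≤ 4 ^ m * (T ^ m * T ^ m) := by gcongr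
    _ = (2 * T) ^ (2 * m) := by rw [pow_mul, ← mul_pow, ← mul_pow]; ring

theorem exists_goodRankMsq_dvd_dvd {m : ℕ} (hm : Odd m) :
    ∃ C : ℕ, 0 < C ∧ ∀ N p q : ℕ, p.Prime → q.Prime → p ≠ q → C < p → C < q → p ≤ N → q ≤ N →
      ∃ d : ℤ, GoodRankMsq m ((C * N) ^ (2 * m)) d ∧ (p : ℤ) ∣ d ∧ (q : ℤ) ∣ d := by
  have hm0 : m ≠ 0 := hm.pos.ne'
  obtain ⟨c, hc, hadm⟩ := exists_isAdmissibleCoefficient_pow hm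
  obtain ⟨M, b₀, hM, hWM, hEM, -, hmodulus⟩ :=
    hadm.exists_isClassRankTwoModulus hm0 hm0 dvd_rfl (dvd_mul_left m 2)
  lift M to ℕ using hM.le
  rw [Int.natCast_pos] at hM
  lift c to ℕ using (by omega)
  have hcM : (c : ℤ) ∣ M := (dvd_pow_self _ hm0).trans hWM
  have hsqM : (c : ℤ) ^ 2 - 1 ∣ (M : ℤ) := by
    refine Dvd.dvd.trans ?_ hEM
    rw [pow_right_comm]
    simpa only [one_pow] using sub_dvd_pow_sub_pow ((c : ℤ) ^ 2) 1 m
  set B := M ^ 2 + M ^ 4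
  have hMB : M ≤ B := (Nat.le_self_pow two_ne_zero M).trans (Nat.le_add_right _ _)
  refine ⟨2 * (c + 1) * B + m, by positivity, fun N p q hp hq hpq hCp hCq hpN hqN => ?_⟩
  have hBC : B ≤ 2 * (c + 1) * B := Nat.le_mul_of_pos_left B (by positivity)
  have hnot {r w : ℕ} (hw0 : 0 < w) (hw : w < r) : ¬ (r : ℤ) ∣ w :=
    fun hdvd => Nat.not_dvd_of_pos_of_lt hw0 hw (Int.natCast_dvd_natCast.1 hdvd)
  obtain ⟨a, b, u, v, hu, huB, hv, hvB, ha, hb, hab, hx, hy⟩ :=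
    exists_isCoprime_and_mul_sub_eq_prime_mul hM hsqM b₀ hp hq hpq (by omega) (by omega)
  have hx0 : (0 : ℤ) < p * u := mod_cast Nat.mul_pos hp.pos hu
  have hy0 : (0 : ℤ) < q * v := mod_cast Nat.mul_pos hq.pos hv
  have hxT : (p * u : ℤ) ≤ N * B := mod_cast Nat.mul_le_mul hpN huB
  have hyT : (q * v : ℤ) ≤ N * B := mod_cast Nat.mul_le_mul hqN hvB
  obtain ⟨ha0, haT⟩ := pos_and_le_of_mul_sub_eq hc hx hy hx0 hy0 hxT hyT
  obtain ⟨hb0, hbT⟩ := pos_and_le_of_mul_sub_eq hc hy hx hy0 hx0 hyT hxT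
  refine hmodulus.exists_goodRankMsq_dvd_dvd hm0 hc hcM hEM ha hb hab ha0 hb0
    (Nat.prime_iff_prime_int.1 hp) (Nat.prime_iff_prime_int.1 hq) hx hy hx0 hy0
    (hnot hM (by omega)) (hnot hM (by omega)) (hnot hm.pos (by omega)) (hnot hm.pos (by omega))
    (hnot hu (by omega)) (hnot hv (by omega)) ?_
  have hbound := four_mul_pow_mul_pow_le hm0 ha0.le hb0.le haT hbT
  have hle : 2 * ((c + 1) * (N * B)) ≤ (2 * (c + 1) * B + m) * N := by nlinarith
  calc ((4 * (a ^ m * b ^ m) : ℤ) : ℝ) ≤ ((2 * ((c + 1) * (N * B)) : ℕ) : ℝ) ^ (2 * m) := by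
        exact_mod_cast hbound
    _ ≤ _ := by
        gcongr
        exact_mod_cast hle

/-- The primes in the interval `(√N, N]`. A nonzero integer bounded by a fixed power of `N` has
only boundedly many prime factors among them. -/
def largePrimes (N : ℕ) : Finset ℕ :=
  (Finset.Ioc N.sqrt N).filter Nat.Prime

theorem mem_largePrimes {N p : ℕ} : p ∈ largePrimes N ↔ (N.sqrt < p ∧ p ≤ N) ∧ p.Prime := by
  rw [largePrimes, Finset.mem_filter, Finset.mem_Ioc]

theorem card_largePrimes_filter_dvd_le {N n k : ℕ} (hn : n ≠ 0) (hnk : n ≤ N ^ k) :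
    ((largePrimes N).filter (· ∣ n)).card ≤ 2 * k := by
  rcases N.eq_zero_or_pos with rfl | hN
  · simp [largePrimes]
  have hdvd : ∏ p ∈ largePrimes N with p ∣ n, p ∣ n :=
    Finset.prod_primes_dvd n (fun p hp => (mem_largePrimes.1 (Finset.mem_filter.1 hp).1).2.prime)
      fun p hp => (Finset.mem_filter.1 hp).2
  refine (Nat.pow_le_pow_iff_right (Nat.succ_lt_succ (Nat.sqrt_pos.2 hN))).1 ?_
  calc (N.sqrt + 1) ^ ((largePrimes N).filter (· ∣ n)).card
      ≤ ∏ p ∈ largePrimes N with p ∣ n, p := Finset.pow_card_le_prod _ _ _ fun p hp =>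
        (mem_largePrimes.1 (Finset.mem_filter.1 hp).1).1.1
    _ ≤ N ^ k := (Nat.le_of_dvd (Nat.pos_of_ne_zero hn) hdvd).trans hnk
    _ ≤ ((N.sqrt + 1) ^ 2) ^ k := Nat.pow_le_pow_left (Nat.lt_succ_sqrt' N).le k
    _ = (N.sqrt + 1) ^ (2 * k) := (pow_mul _ 2 k).symm

theorem card_offDiag_largePrimes_filter_dvd_le {N n k : ℕ} (hn : n ≠ 0) (hnk : n ≤ N ^ k) :
    ((largePrimes N).offDiag.filter fun x => x.1 ∣ n ∧ x.2 ∣ n).card ≤ (2 * k) ^ 2 := by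
  have hcard := card_largePrimes_filter_dvd_le hn hnk
  have hsub : ((largePrimes N).offDiag.filter fun x => x.1 ∣ n ∧ x.2 ∣ n) ⊆
      ((largePrimes N).filter (· ∣ n)) ×ˢ ((largePrimes N).filter (· ∣ n)) := fun x hx => by
    obtain ⟨hx, hpd, hqd⟩ := Finset.mem_filter.1 hx
    obtain ⟨hp, hq, -⟩ := Finset.mem_offDiag.1 hx
    exact Finset.mem_product.2 ⟨Finset.mem_filter.2 ⟨hp, hpd⟩, Finset.mem_filter.2 ⟨hq, hqd⟩⟩
  calc _ ≤ _ := Finset.card_le_card hsub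
    _ = _ := Finset.card_product _ _
    _ ≤ (2 * k) ^ 2 := (Nat.mul_le_mul hcard hcard).trans_eq (sq _).symm

theorem primeCounting_le_card_largePrimes_add_sqrt (N : ℕ) :
    N.primeCounting ≤ (largePrimes N).card + N.sqrt := by
  have hsub : N.primesLE ⊆ largePrimes N ∪ Finset.Icc 1 N.sqrt := fun p hp => by
    obtain ⟨hpN, hp⟩ := Nat.mem_primesLE.1 hp
    rw [Finset.mem_union, mem_largePrimes, Finset.mem_Icc]
    exact (lt_or_ge N.sqrt p).imp (fun hlt => ⟨⟨hlt, hpN⟩, hp⟩) fun hle => ⟨hp.pos, hle⟩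
  calc N.primeCounting = N.primesLE.card := (Nat.primesLE_card_eq_primeCounting N).symm
    _ ≤ (largePrimes N).card + (Finset.Icc 1 N.sqrt).card :=
        (Finset.card_le_card hsub).trans (Finset.card_union_le _ _)
    _ = (largePrimes N).card + N.sqrt := by rw [Nat.card_Icc, Nat.add_sub_cancel]

open Filter in
theorem eventually_div_log_le_card_largePrimes :
    ∀ᶠ N : ℕ in atTop, (N : ℝ) / (4 * Real.log N) ≤ (largePrimes N).card := by
  have hlog : ∀ᶠ x : ℝ in atTop, ‖Real.log x‖ ≤ 1 / 10 * ‖x ^ (1 / 2 : ℝ)‖ :=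
    (isLittleO_log_rpow_atTop one_half_pos).bound (by norm_num)
  filter_upwards [tendsto_natCast_atTop_atTop.eventually hlog, eventually_ge_atTop 100]
    with N hN hN'
  have hN100 : (100 : ℝ) ≤ N := mod_cast hN'
  have hpos : 0 < Real.log N := Real.log_pos (by linarith)
  rw [← Real.sqrt_eq_rpow, Real.norm_of_nonneg hpos.le, Real.norm_of_nonneg (by positivity)] at hN
  have hsq : √(N : ℝ) * √N = N := Real.mul_self_sqrt (by positivity)
  have hsqrt : 10 ≤ √(N : ℝ) := Real.le_sqrt_of_sq_le (by linarith)
  have hlog_succ : Real.log (N + 1) ≤ 2 * Real.log N := by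
    rw [← Real.log_rpow (by positivity), Real.rpow_two]
    exact Real.log_le_log (by positivity) (by nlinarith)
  have hcard : (N.primeCounting : ℝ) ≤ (largePrimes N).card + √N :=
    (Nat.cast_le.2 (primeCounting_le_card_largePrimes_add_sqrt N)).trans <| by
      rw [Nat.cast_add]
      gcongr
      exact Real.nat_sqrt_le_real_sqrt
  have hpi := (div_le_iff₀ hpos).1 ((Chebyshev.pi_ge N).trans hcard)
  rw [div_le_iff₀ (by positivity)]
  nlinarith [Real.log_two_gt_d9]

theorem exists_card_offDiag_largePrimes_le {m : ℕ} (hm : Odd m) :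
    ∃ C : ℕ, 0 < C ∧ ∀ N : ℕ, C ^ (2 * m) ≤ N → (largePrimes N).offDiag.card ≤
      {d : ℤ | GoodRankMsq m ((C * N) ^ (2 * m)) d}.ncard * (2 * (2 * m + 1)) ^ 2 := by
  obtain ⟨C, hC, hpair⟩ := exists_goodRankMsq_dvd_dvd hm
  refine ⟨C, hC, fun N hN => ?_⟩
  have hlarge {p : ℕ} (hp : p ∈ largePrimes N) : p.Prime ∧ C < p ∧ p ≤ N := by
    obtain ⟨⟨hlt, hle⟩, hp⟩ := mem_largePrimes.1 hp
    have hCN : C ^ 2 ≤ N := (Nat.pow_le_pow_right hC (Nat.le_mul_of_pos_right 2 hm.pos)).trans hN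
    exact ⟨hp, (Nat.le_sqrt'.2 hCN).trans_lt hlt, hle⟩
  have hfin := finite_setOf_goodRankMsq m (((C : ℝ) * N) ^ (2 * m))
  rw [Set.ncard_eq_toFinset_card _ hfin, ← mul_one (Finset.card _)]
  refine Finset.card_mul_le_card_mul (fun x d => x.1 ∣ d.natAbs ∧ x.2 ∣ d.natAbs)
    (fun x hx => ?_) fun d hd => ?_
  · obtain ⟨hp, hq, hpq⟩ := Finset.mem_offDiag.1 hx
    obtain ⟨hp, hCp, hpN⟩ := hlarge hp
    obtain ⟨hq, hCq, hqN⟩ := hlarge hq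
    obtain ⟨d, hd, hpd, hqd⟩ := hpair N x.1 x.2 hp hq hpq hCp hCq hpN hqN
    exact Finset.card_pos.2 ⟨d, (Finset.mem_bipartiteAbove _).2
      ⟨hfin.mem_toFinset.2 hd, Int.natCast_dvd.1 hpd, Int.natCast_dvd.1 hqd⟩⟩
  · have hd : GoodRankMsq m (((C : ℝ) * N) ^ (2 * m)) d := hfin.mem_toFinset.1 hd
    refine card_offDiag_largePrimes_filter_dvd_le (Int.natAbs_ne_zero.2 hd.1.ne) ?_
    have habs : (d.natAbs : ℝ) ≤ (C * N) ^ (2 * m) := by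
      rw [Nat.cast_natAbs, Int.cast_abs]
      exact hd.abs_le
    calc d.natAbs ≤ (C * N) ^ (2 * m) := mod_cast habs
      _ = C ^ (2 * m) * N ^ (2 * m) := mul_pow C N _
      _ ≤ N * N ^ (2 * m) := Nat.mul_le_mul_right _ hN
      _ = N ^ (2 * m + 1) := (pow_succ' N _).symm

open Filter in
theorem exists_eventually_mul_rpow_div_log_sq_le {f : ℝ → ℝ} (hf : Monotone f) {C D : ℝ} {m : ℕ}
    (hm : m ≠ 0) (hC : 1 ≤ C) (hD : 0 < D)
    (h : ∀ᶠ N : ℕ in atTop, ((N : ℝ) / Real.log N) ^ 2 ≤ D * f ((C * N) ^ (2 * m))) :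
    ∃ c > 0, ∀ᶠ X in atTop, c * X ^ (1 / (m : ℝ)) / Real.log X ^ 2 ≤ f X := by
  have hC0 : 0 < C := one_pos.trans_le hC
  have hN : Tendsto (fun X : ℝ => ⌊X ^ (1 / ((2 * m : ℕ) : ℝ)) / C⌋₊) atTop atTop :=
    tendsto_nat_floor_atTop.comp <| (tendsto_rpow_atTop (by positivity)).atTop_div_const hC0
  refine ⟨1 / (4 * C ^ 2 * D), by positivity, ?_⟩
  filter_upwards [eventually_ge_atTop 0, hN.eventually h, hN.eventually_ge_atTop 2]
    with X hX hbound hN2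
  set Y := X ^ (1 / ((2 * m : ℕ) : ℝ)) with hY
  set N := ⌊Y / C⌋₊
  have hYX : Y ^ (2 * m) = X := by rw [hY, one_div, Real.rpow_inv_natCast_pow hX (by omega)]
  have hYm : X ^ (1 / (m : ℝ)) = Y ^ 2 := by
    rw [← hYX, pow_mul, one_div, Real.pow_rpow_inv_natCast (by positivity) hm]
  have hN2' : (2 : ℝ) ≤ N := mod_cast hN2
  have hNX : (C * N) ^ (2 * m) ≤ X := by
    rw [← hYX]
    gcongr
    exact (le_div_iff₀' hC0).1 (Nat.floor_le (by positivity))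
  have hYN : Y / (2 * C) ≤ N := by
    have hlt : Y / C < N + 1 := Nat.lt_floor_add_one _
    rw [mul_comm, ← div_div]
    linarith
  have : 0 ≤ Y / (2 * C) := by positivity
  have hlogN : 0 < Real.log N := Real.log_pos (by linarith)
  have hlog : Real.log N ≤ Real.log X := by
    have hCN : N ≤ C * N := le_mul_of_one_le_left (by positivity) hC
    exact Real.log_le_log (by positivity) <|
      hCN.trans <| (le_self_pow₀ (by linarith) (by omega)).trans hNX
  calc 1 / (4 * C ^ 2 * D) * X ^ (1 / (m : ℝ)) / Real.log X ^ 2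
      = (Y / (2 * C) / Real.log X) ^ 2 / D := by
        rw [hYm]
        ring
    _ ≤ (N / Real.log N) ^ 2 / D := by
        have := hlogN.trans_le hlog
        gcongr
    _ ≤ f ((C * N) ^ (2 * m)) := (div_le_iff₀' hD).2 hbound
    _ ≤ f X := hf hNX

open Filter in
theorem eventually_mul_rpow_div_log_sq_le_ncard_of_odd {m : ℕ} (hm : Odd m) :
    ∃ c : ℝ, 0 < c ∧ ∀ᶠ X : ℝ in atTop,
      c * X ^ (1 / (m : ℝ)) / Real.log X ^ 2 ≤ {d : ℤ | GoodRankMsq m X d}.ncard := by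
  obtain ⟨C, hC, hcount⟩ := exists_card_offDiag_largePrimes_le hm
  refine exists_eventually_mul_rpow_div_log_sq_le (monotone_ncard_setOf_goodRankMsq m)
    (C := C) (D := 32 * (2 * (2 * m + 1)) ^ 2) hm.pos.ne' (mod_cast hC) (by positivity) ?_
  have hlog : ∀ᶠ x : ℝ in atTop, ‖Real.log x‖ ≤ 1 / 8 * ‖x‖ :=
    Real.isLittleO_log_id_atTop.bound (by norm_num)
  filter_upwards [eventually_div_log_le_card_largePrimes, eventually_ge_atTop (C ^ (2 * m)),
    tendsto_natCast_atTop_atTop.eventually hlog, eventually_ge_atTop 2] with N hN hCN hlogN hN2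
  set Z := {d : ℤ | GoodRankMsq m (((C : ℝ) * N) ^ (2 * m)) d}.ncard
  set t := (largePrimes N).card
  have hlog0 : 0 < Real.log N := Real.log_pos (by exact_mod_cast hN2)
  rw [Real.norm_of_nonneg hlog0.le, Real.norm_of_nonneg (by positivity)] at hlogN
  have ht2 : 2 ≤ (t : ℝ) := hN.trans' <| by
    rw [le_div_iff₀ (by positivity)]
    linarith
  have hcard : (t : ℝ) * t - t ≤ Z * (2 * (2 * m + 1)) ^ 2 := by
    have hoff : t * t ≤ Z * (2 * (2 * m + 1)) ^ 2 + t :=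
      Nat.sub_le_iff_le_add.1 ((Finset.offDiag_card _).symm.trans_le (hcount N hCN))
    rw [sub_le_iff_le_add]
    exact_mod_cast hoff
  calc (N / Real.log N) ^ 2 = 16 * (N / (4 * Real.log N)) ^ 2 := by
        field_simp
        norm_num
    _ ≤ 16 * (t : ℝ) ^ 2 := by gcongr
    _ ≤ 32 * (2 * (2 * m + 1)) ^ 2 * Z := by nlinarith

/-- Kulkarni–Levin: for any integer `m > 1`, there are `≫ X^(1/m)/(log X)²` imaginary
quadratic fields with `|d_k| ≤ X` whose ideal class group has `m`-rank at least 2. -/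
theorem count_imag_quad_mrank_two (m : ℕ) (hm : 1 < m) :
    ∃ c : ℝ, 0 < c ∧ ∃ X₀ : ℝ, ∀ X : ℝ, X₀ ≤ X →
      c * X ^ ((1 : ℝ) / (m : ℝ)) / (Real.log X) ^ 2 ≤
        ({d : ℤ | GoodRankMsq m X d}.ncard : ℝ) := by
  obtain ⟨c, hc, hcount⟩ : ∃ c : ℝ, 0 < c ∧ ∀ᶠ X : ℝ in Filter.atTop,
      c * X ^ ((1 : ℝ) / (m : ℝ)) / (Real.log X) ^ 2 ≤
        ({d : ℤ | GoodRankMsq m X d}.ncard : ℝ) := by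
    rcases Nat.even_or_odd' m with ⟨n, rfl | rfl⟩
    · exact eventually_mul_rpow_div_log_sq_le_ncard_of_even (by omega)
    · exact eventually_mul_rpow_div_log_sq_le_ncard_of_odd (odd_two_mul_add_one n)
  exact ⟨c, hc, Filter.eventually_atTop.1 hcount⟩
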